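/- arXiv:1507.04999 — 5 statements merged into one kernel-verified Lean document; each statement's English description precedes it below -/
import Mathlib

section
/- For λ ∈ K, the λ-eigenspace of E acting on Δ is nonzero if and only if λ = −(Σ_{j=0}^n d_j + s) for some s ∈ 𝒜. In other words, the set of E-eigenvalues on Δ is exactly −Σ_j d_j − 𝒜. -/
/-!
Context: `K` is a field of characteristic zero, `n ≥ 0`, and `d 0, …, d n` are
positive integers.  `A = K[x_0, …, x_n]` is the polynomial ring, graded with
`x i` of weighted degree `d i`.  Inside `End_K(A)` we have the multiplication
operators `x i`, the partial derivatives `∂ i`, the Weyl algebra `D` generated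
by them, and the Euler field `E = Σ_i d_i x_i ∂_i`.
-/

open MvPolynomial Finset

set_option synthInstance.maxHeartbeats 1000000
set_option maxHeartbeats 2000000

noncomputable section

variable (K : Type) [Field K] [CharZero K] (n : ℕ)

/-- The polynomial ring `A = K[x_0, …, x_n]`. -/
abbrev Amb := MvPolynomial (Fin (n+1)) K

/-- The operator of multiplication by `x_i` on `A`. -/
def xOp (i : Fin (n+1)) : Module.End K (Amb K n) := LinearMap.mulLeft K (X i)

/-- The partial derivative `∂/∂x_i` on `A`. -/
def dOp (i : Fin (n+1)) : Module.End K (Amb K n) := (pderiv i).toLinearMap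

/-- The Weyl algebra `D`: the `K`-subalgebra of `End_K(A)` generated by
`x_0, …, x_n, ∂_0, …, ∂_n`. -/
def Weyl : Subalgebra K (Module.End K (Amb K n)) :=
  Algebra.adjoin K (Set.range (xOp K n) ∪ Set.range (dOp K n))

variable (d : Fin (n+1) → ℕ)

/-- The Euler field `E = Σ_i d_i x_i ∂_i`, as an endomorphism of `A`. -/
def euler : Module.End K (Amb K n) := ∑ i, (d i : K) • (xOp K n i * dOp K n i)

lemma xOp_mem (i : Fin (n+1)) : xOp K n i ∈ Weyl K n :=
  Algebra.subset_adjoin (Or.inl ⟨i, rfl⟩)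

lemma dOp_mem (i : Fin (n+1)) : dOp K n i ∈ Weyl K n :=
  Algebra.subset_adjoin (Or.inr ⟨i, rfl⟩)

lemma euler_mem : euler K n d ∈ Weyl K n :=
  Subalgebra.sum_mem _ fun i _ => Subalgebra.smul_mem _
    (Subalgebra.mul_mem _ (xOp_mem K n i) (dOp_mem K n i)) _

/-- `x_i` as an element of the Weyl algebra. -/
def xElt (i : Fin (n+1)) : Weyl K n := ⟨xOp K n i, xOp_mem K n i⟩

/-- `∂_i` as an element of the Weyl algebra. -/
def dElt (i : Fin (n+1)) : Weyl K n := ⟨dOp K n i, dOp_mem K n i⟩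

/-- The Euler field as an element of the Weyl algebra. -/
def eulerElt : Weyl K n := ⟨euler K n d, euler_mem K n d⟩

instance : HasQuotient (Weyl K n) (Submodule (Weyl K n) (Weyl K n)) :=
  @Submodule.hasQuotient (Weyl K n) (Weyl K n) _ _ _

/-- The left ideal `Dx_0 + Dx_1 + ⋯ + Dx_n` of the Weyl algebra. -/
def lIdeal : Submodule (Weyl K n) (Weyl K n) :=
  Submodule.span (Weyl K n) (Set.range (xElt K n))

/-- `Δ = D/(Dx_0 + ⋯ + Dx_n)`, as a left `D`-module. -/
abbrev Delta := (Weyl K n) ⧸ (lIdeal K n)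

/-- `∂^a = ∂_0^{a_0} ⋯ ∂_n^{a_n}` as an element of the Weyl algebra. -/
def dpow (a : Fin (n+1) →₀ ℕ) : Weyl K n :=
  (List.ofFn fun i => dElt K n i ^ a i).prod

/-!
Write `M = D / ∑ D x_i` and let `w` be the class of `1`, so that `x_i w = 0`. Commuting `x_i` past a
word `u` in the `∂_j` gives `x_i ∂_i u w = -(1 + b_i) u w`, where `b_i` is the number of occurrences
of `∂_i` in `u`. Hence the `u w` span `M`, and as long as `w ≠ 0` they are nonzero eigenvectors of
`E` with eigenvalues `-∑ d_i (1 + b_i)`; an operator with a spanning family of eigenvectors has no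
eigenvalues beyond theirs.

That `w ≠ 0` is the statement that the vacuum is not in the image of the creation operators. The
operators `ad ∂_i` and right multiplication by `x_j` on `D` again satisfy the canonical commutation
relations, `ad ∂_i` is locally nilpotent and kills `1`, and if `1 = Q x_i + P` with `P` in the span
of the other `D x_j`, then applying `ad ∂_i` repeatedly shows that `Q` lies in that span too.
-/

section Eigenvalues

variable {k V α : Type*} [CommRing k] [IsDomain k] [AddCommGroup V] [Module k V]
  [Module.IsTorsionFree k V]

lemma hasEigenvalue_iff_of_span_eigenvectors_eq_top {T : Module.End k V} {e : α → V} {μ : α → k}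
    (he : ∀ a, T.HasEigenvector (μ a) (e a)) (hspan : Submodule.span k (Set.range e) = ⊤) {t : k} :
    T.HasEigenvalue t ↔ ∃ a, t = μ a := by
  constructor
  · intro ht
    by_contra! hne
    obtain ⟨v, hv⟩ := ht.exists_hasEigenvector
    have hle : Submodule.span k (Set.range e) ≤ ⨆ (s : k) (_ : s ≠ t), T.eigenspace s :=
      Submodule.span_le.2 <| Set.range_subset_iff.2 fun a =>
        Submodule.mem_iSup_of_mem (μ a) <| Submodule.mem_iSup_of_mem (hne a).symm (he a).1
    exact hv.2 <| Submodule.disjoint_def.1 (T.eigenspaces_iSupIndep t) v hv.1 <|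
      hle (hspan ▸ Submodule.mem_top)
  · rintro ⟨a, rfl⟩
    exact Module.End.hasEigenvalue_of_hasEigenvector (he a)

end Eigenvalues

section Adjoin

variable {k R M : Type*} [CommSemiring k] [Semiring R] [Algebra k R] [AddCommMonoid M] [Module k M]
  [Module R M] [IsScalarTower k R M]

lemma smul_mem_of_mem_adjoin {s : Set R} {N : Submodule k M}
    (hN : ∀ a ∈ s, ∀ m ∈ N, a • m ∈ N) {a : R} (ha : a ∈ Algebra.adjoin k s) :
    ∀ m ∈ N, a • m ∈ N := by
  induction ha using Algebra.adjoin_induction with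
  | mem a ha => exact hN a ha
  | algebraMap c => exact fun m hm => by simpa only [algebraMap_smul] using N.smul_mem c hm
  | add a b _ _ ha hb =>
    exact fun m hm => by simpa only [add_smul] using N.add_mem (ha m hm) (hb m hm)
  | mul a b _ _ ha hb => exact fun m hm => by simpa only [mul_smul] using ha _ (hb m hm)

end Adjoin

section LocallyNilpotent

variable {k V ι : Type*} [AddCommGroup V]

section CommRing

variable [CommRing k] [Module k V]

lemma mem_maxGenEigenspace_zero_iff {D : Module.End k V} {v : V} :
    v ∈ D.maxGenEigenspace 0 ↔ ∃ N, (D ^ N) v = 0 := by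
  simp only [Module.End.mem_maxGenEigenspace, zero_smul, sub_zero]

lemma mem_maxGenEigenspace_zero_of_apply_mem {D : Module.End k V} {v : V}
    (h : D v ∈ D.maxGenEigenspace 0) : v ∈ D.maxGenEigenspace 0 := by
  obtain ⟨N, hN⟩ := mem_maxGenEigenspace_zero_iff.1 h
  exact mem_maxGenEigenspace_zero_iff.2 ⟨N + 1, hN⟩

lemma apply_mem_maxGenEigenspace_zero {D T : Module.End k V}
    (hDT : ∀ v ∈ D.maxGenEigenspace 0, D (T v) - T (D v) ∈ D.maxGenEigenspace 0) :
    ∀ v ∈ D.maxGenEigenspace 0, T v ∈ D.maxGenEigenspace 0 := by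
  intro v hv
  obtain ⟨N, hN⟩ := mem_maxGenEigenspace_zero_iff.1 hv
  induction N generalizing v with
  | zero => rw [show v = 0 from hN, map_zero]; exact zero_mem _
  | succ N ih =>
    have hDv : D v ∈ D.maxGenEigenspace 0 :=
      Module.End.mapsTo_maxGenEigenspace_of_comm (Commute.refl D) 0 hv
    refine mem_maxGenEigenspace_zero_of_apply_mem ?_
    simpa only [sub_add_cancel] using add_mem (hDT v hv) (ih (D v) hDv hN)

lemma sup_range_mem_invtSubmodule {f : Module.End k V} {T : ι → Module.End k V} {S : Finset ι}
    (hT : ∀ i ∈ S, Commute f (T i)) :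
    (S.sup fun i => LinearMap.range (T i)) ∈ f.invtSubmodule := by
  refine Finset.sup_induction (Module.End.invtSubmodule.bot_mem f)
    (fun _ hp _ hq => Sublattice.sup_mem hp hq) fun i hi => ?_
  rintro _ ⟨v, rfl⟩
  exact ⟨f v, (LinearMap.congr_fun (hT i hi) v).symm⟩

end CommRing

variable [Field k] [CharZero k] [Module k V]

lemma mem_of_apply_add_nsmul_mem {D T : Module.End k V}
    (hDT : ∀ v, D (T v) = T (D v) + v) {U : Submodule k V} (hDU : U ∈ D.invtSubmodule)
    (hTU : U ∈ T.invtSubmodule) {v : V} {N : ℕ} (hN : (D ^ N) v = 0) {c : ℕ} (hc : c ≠ 0)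
    (hv : T (D v) + c • v ∈ U) : v ∈ U := by
  -- Applying `D` turns the hypothesis on `v` and `c` into the one on `D v` and `c + 1`.
  induction N generalizing v c with
  | zero => rw [show v = 0 from hN]; exact U.zero_mem
  | succ N ih =>
    have hDv : D v ∈ U := by
      refine ih hN c.succ_ne_zero ?_
      have := hDU hv
      rwa [Submodule.mem_comap, map_add, hDT, map_nsmul, add_assoc, ← succ_nsmul'] at this
    have hcv : (c : k) • v ∈ U := by
      simpa only [Nat.cast_smul_eq_nsmul] using (U.add_mem_iff_right (hTU hDv)).1 hv
    exact (U.smul_mem_iff (Nat.cast_ne_zero.2 hc)).1 hcv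

lemma eq_zero_of_mem_sup_range [DecidableEq ι] {D T : ι → Module.End k V}
    (hDT : ∀ i j v, D i (T j v) = T j (D i v) + if i = j then v else 0)
    (hT : ∀ i j, Commute (T i) (T j)) (hD : ∀ i, (D i).maxGenEigenspace 0 = ⊤) (S : Finset ι)
    {u : V} (hDu : ∀ i, D i u = 0) (hu : u ∈ S.sup fun i => LinearMap.range (T i)) : u = 0 := by
  induction S using Finset.induction_on with
  | empty => simpa using hu
  | insert j S hj ih =>
    apply ih
    set U := S.sup fun i => LinearMap.range (T i)
    have hDU : U ∈ (D j).invtSubmodule := by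
      refine sup_range_mem_invtSubmodule fun i hi => LinearMap.ext fun v => ?_
      simp [hDT, (ne_of_mem_of_not_mem hi hj).symm]
    have hTU : U ∈ (T j).invtSubmodule := sup_range_mem_invtSubmodule fun i _ => hT j i
    rw [Finset.sup_insert, Submodule.mem_sup] at hu
    obtain ⟨_, ⟨v, rfl⟩, p, hp, rfl⟩ := hu
    obtain ⟨N, hN⟩ := mem_maxGenEigenspace_zero_iff.1 (hD j ▸ Submodule.mem_top : v ∈ _)
    have hv : v ∈ U := by
      refine mem_of_apply_add_nsmul_mem (fun v => by simp [hDT]) hDU hTU hN one_ne_zero ?_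
      have : T j (D j v) + v = -D j p := by
        rw [eq_neg_iff_add_eq_zero, ← hDu j, map_add, hDT, if_pos rfl]
      rw [one_nsmul, this]
      exact U.neg_mem (hDU hp)
    exact U.add_mem (hTU hv) hp

end LocallyNilpotent

section WeylPair

variable {k R M ι : Type*} [DecidableEq ι] {x y : ι → R}

variable (k x y) in
/-- The presentation of the Weyl algebra: `x` and `y` generate the `k`-algebra `R` and satisfy the
canonical commutation relations, `y_i` playing the role of `∂/∂x_i`. -/
structure IsWeylPair [CommRing k] [Ring R] [Algebra k R] : Prop where
  y_mul_x (i j : ι) : y i * x j = x j * y i + if i = j then 1 else 0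
  commute_x (i j : ι) : Commute (x i) (x j)
  commute_y (i j : ι) : Commute (y i) (y j)
  adjoin_eq_top : Algebra.adjoin k (Set.range x ∪ Set.range y) = ⊤

namespace IsWeylPair

attribute [local instance] LieRing.ofAssociativeRing

variable [Ring R]

section CommRing

variable [CommRing k] [Algebra k R]

lemma maxGenEigenspace_ad_y (h : IsWeylPair k x y) (i : ι) :
    (LieAlgebra.ad k R (y i)).maxGenEigenspace 0 = ⊤ := by
  set L := (LieAlgebra.ad k R (y i)).maxGenEigenspace 0
  have one_mem : (1 : R) ∈ L :=
    mem_maxGenEigenspace_zero_of_apply_mem <| by simp [LieRing.of_associative_ring_bracket]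
  have gen_mul_mem : ∀ a ∈ Set.range x ∪ Set.range y, ∀ q ∈ L, a • q ∈ L := by
    rintro _ (⟨j, rfl⟩ | ⟨j, rfl⟩)
    · refine apply_mem_maxGenEigenspace_zero (T := LinearMap.mulLeft k (x j)) fun q hq => ?_
      have : ⁅y i, x j * q⁆ - x j * ⁅y i, q⁆ = if i = j then q else 0 := by
        simp only [LieRing.of_associative_ring_bracket, mul_sub, ← mul_assoc, h.y_mul_x, add_mul,
          ite_mul, one_mul, zero_mul]
        abel
      rw [LieAlgebra.ad_apply, LieAlgebra.ad_apply, LinearMap.mulLeft_apply,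
        LinearMap.mulLeft_apply, this]
      split_ifs
      exacts [hq, zero_mem _]
    · refine apply_mem_maxGenEigenspace_zero (T := LinearMap.mulLeft k (y j)) fun q _ => ?_
      have : ⁅y i, y j * q⁆ - y j * ⁅y i, q⁆ = 0 := by
        simp only [LieRing.of_associative_ring_bracket, mul_sub, ← mul_assoc, (h.commute_y i j).eq]
        abel
      rw [LieAlgebra.ad_apply, LieAlgebra.ad_apply, LinearMap.mulLeft_apply,
        LinearMap.mulLeft_apply, this]
      exact zero_mem _
  refine eq_top_iff.2 fun P _ => ?_
  simpa using smul_mem_of_mem_adjoin gen_mul_mem (h.adjoin_eq_top ▸ Algebra.mem_top : P ∈ _) 1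
    one_mem

variable [AddCommGroup M] [Module R M] {w : M}

lemma x_smul_y_smul (h : IsWeylPair k x y) (i j : ι) (v : M) :
    x i • y j • v = y j • x i • v - if j = i then v else 0 := by
  rw [eq_sub_iff_add_eq, ← mul_smul, ← mul_smul, h.y_mul_x, add_smul, ite_smul, one_smul, zero_smul]

variable [Module k M] [IsScalarTower k R M]

lemma span_yWord_smul_eq_top (h : IsWeylPair k x y) (hw : ∀ i, x i • w = 0)
    (hspan : Submodule.span R {w} = ⊤) :
    Submodule.span k (Set.range fun l : List ι => (l.map y).prod • w) = ⊤ := by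
  set N := Submodule.span k (Set.range fun l : List ι => (l.map y).prod • w)
  have word_mem (l : List ι) : (l.map y).prod • w ∈ N := Submodule.subset_span ⟨l, rfl⟩
  have y_word_mem (i : ι) (l : List ι) : y i • (l.map y).prod • w ∈ N := by
    simpa [mul_smul] using word_mem (i :: l)
  have y_smul_mem (i : ι) : N ≤ N.comap (Algebra.lsmul k k M (y i)) :=
    Submodule.span_le.2 <| Set.range_subset_iff.2 (y_word_mem i)
  have x_word_mem (i : ι) (l : List ι) : x i • (l.map y).prod • w ∈ N := by
    induction l with
    | nil => simp [hw]
    | cons j l ih =>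
      rw [List.map_cons, List.prod_cons, mul_smul, h.x_smul_y_smul]
      refine N.sub_mem (y_smul_mem j ih) ?_
      split_ifs
      exacts [word_mem l, N.zero_mem]
  have gen_smul_mem : ∀ a ∈ Set.range x ∪ Set.range y, ∀ m ∈ N, a • m ∈ N := by
    rintro _ (⟨i, rfl⟩ | ⟨i, rfl⟩)
    · exact (Submodule.span_le (p := N.comap (Algebra.lsmul k k M (x i)))).2 <|
        Set.range_subset_iff.2 (x_word_mem i)
    · exact y_smul_mem i
  refine eq_top_iff.2 fun v _ => ?_
  obtain ⟨P, rfl⟩ := Submodule.mem_span_singleton.1 (hspan ▸ Submodule.mem_top : v ∈ _)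
  exact smul_mem_of_mem_adjoin gen_smul_mem (h.adjoin_eq_top ▸ Algebra.mem_top) w
    (by simpa using word_mem [])

lemma x_smul_y_smul_yWord_smul (h : IsWeylPair k x y) (hw : ∀ i, x i • w = 0) (i : ι)
    (l : List ι) :
    x i • y i • (l.map y).prod • w = -((l.count i : k) + 1) • (l.map y).prod • w := by
  induction l with
  | nil => simp [h.x_smul_y_smul, hw]
  | cons j l ih =>
    have hswap (v : M) : y i • y j • v = y j • y i • v := by
      rw [← mul_smul, (h.commute_y i j).eq, mul_smul]
    rw [List.map_cons, List.prod_cons, mul_smul, hswap, h.x_smul_y_smul, ih, smul_comm (y j)]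
    rcases eq_or_ne j i with rfl | hji
    · rw [if_pos rfl, List.count_cons_self, Nat.cast_succ, neg_smul, neg_smul,
        add_smul ((l.count j : k) + 1) 1, one_smul, neg_add']
    · rw [if_neg hji, sub_zero, List.count_cons_of_ne hji]

lemma sum_smul_yWord_smul [Fintype ι] (h : IsWeylPair k x y) (hw : ∀ i, x i • w = 0) (c : ι → k)
    (l : List ι) :
    (∑ i, c i • (x i * y i)) • (l.map y).prod • w =
      (-(∑ i, c i + ∑ i, (l.count i : k) * c i)) • (l.map y).prod • w := by
  simp only [Finset.sum_smul, smul_assoc, mul_smul, h.x_smul_y_smul_yWord_smul hw]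
  simp only [← mul_smul, ← Finset.sum_smul, ← Finset.sum_add_distrib, ← Finset.sum_neg_distrib]
  congr 1
  exact Finset.sum_congr rfl fun i _ => by ring

end CommRing

variable [Field k] [CharZero k] [Algebra k R]

lemma one_notMem_span_x [Nontrivial R] (h : IsWeylPair k x y) :
    (1 : R) ∉ Submodule.span R (Set.range x) := by
  intro hone
  obtain ⟨q, hq⟩ := Finsupp.mem_span_range_iff_exists_finsupp.1 hone
  refine one_ne_zero (α := R) <| eq_zero_of_mem_sup_range (D := fun i => LieAlgebra.ad k R (y i))
    (T := fun j => LinearMap.mulRight k (x j)) (fun i j p => ?_) (fun i j => ?_)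
    h.maxGenEigenspace_ad_y q.support (fun i => ?_) ?_
  · simp only [LieAlgebra.ad_apply, LinearMap.mulRight_apply, LieRing.of_associative_ring_bracket,
      sub_mul, mul_assoc, h.y_mul_x, mul_add, mul_ite, mul_one, mul_zero]
    abel
  · ext p
    simp [mul_assoc, (h.commute_x i j).eq]
  · simp [LieRing.of_associative_ring_bracket]
  · rw [← hq]
    exact Submodule.sum_mem _ fun i hi => Finset.le_sup (f := fun j => LinearMap.range
      (LinearMap.mulRight k (x j))) hi ⟨q i, rfl⟩

lemma yWord_smul_ne_zero [AddCommGroup M] [Module k M] [Module R M] [IsScalarTower k R M]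
    {w : M} (h : IsWeylPair k x y) (hw : ∀ i, x i • w = 0) (hw₀ : w ≠ 0) (l : List ι) :
    (l.map y).prod • w ≠ 0 := by
  induction l with
  | nil => simpa using hw₀
  | cons j l ih =>
    intro hzero
    rw [List.map_cons, List.prod_cons, mul_smul] at hzero
    have heigen := h.x_smul_y_smul_yWord_smul hw j l
    rw [hzero, smul_zero, eq_comm] at heigen
    exact smul_ne_zero (neg_ne_zero.2 (Nat.cast_add_one_ne_zero _)) ih heigen

end IsWeylPair

lemma exists_list_count_eq (b : ι →₀ ℕ) : ∃ l : List ι, ∀ i, l.count i = b i :=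
  ⟨(Finsupp.toMultiset b).toList, fun i => by
    rw [← Multiset.coe_count, Multiset.coe_toList, Finsupp.count_toMultiset]⟩

theorem stmt6_general [Field k] [CharZero k] [Ring R] [Nontrivial R] [Algebra k R] [Fintype ι]
    (h : IsWeylPair k x y) (c : ι → k) (t : k) :
    (∃ v : R ⧸ Submodule.span R (Set.range x), v ≠ 0 ∧ (∑ i, c i • (x i * y i)) • v = t • v) ↔
      ∃ b : ι → ℕ, t = -(∑ i, c i + ∑ i, (b i : k) * c i) := by
  set I := Submodule.span R (Set.range x)
  set w : R ⧸ I := I.mkQ 1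
  have hw (i : ι) : x i • w = 0 := by
    rw [← map_smul, smul_eq_mul, mul_one, Submodule.mkQ_apply, Submodule.Quotient.mk_eq_zero]
    exact Submodule.subset_span ⟨i, rfl⟩
  have hw₀ : w ≠ 0 := fun h₀ => h.one_notMem_span_x ((Submodule.Quotient.mk_eq_zero I).1 h₀)
  have hspan : Submodule.span R {w} = ⊤ := by
    refine eq_top_iff.2 fun v _ => ?_
    obtain ⟨q, rfl⟩ := I.mkQ_surjective v
    exact Submodule.mem_span_singleton.2 ⟨q, by rw [← map_smul, smul_eq_mul, mul_one]⟩
  set E : Module.End k (R ⧸ I) := Algebra.lsmul k k (R ⧸ I) (∑ i, c i • (x i * y i))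
  have heigen (l : List ι) : E.HasEigenvector (-(∑ i, c i + ∑ i, (l.count i : k) * c i))
      ((l.map y).prod • w) :=
    ⟨Module.End.mem_eigenspace_iff.2 (h.sum_smul_yWord_smul hw c l),
      h.yWord_smul_ne_zero hw hw₀ l⟩
  calc
    _ ↔ E.HasEigenvalue t := by
      simp only [Module.End.hasEigenvalue_iff, Submodule.ne_bot_iff, Module.End.mem_eigenspace_iff,
        and_comm]
      rfl
    _ ↔ ∃ l : List ι, t = -(∑ i, c i + ∑ i, (l.count i : k) * c i) :=
      hasEigenvalue_iff_of_span_eigenvectors_eq_top heigen (h.span_yWord_smul_eq_top hw hspan)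
    _ ↔ _ := by
      refine ⟨fun ⟨l, hl⟩ => ⟨fun i => l.count i, hl⟩, fun ⟨b, hb⟩ => ?_⟩
      obtain ⟨l, hl⟩ := exists_list_count_eq (Finsupp.equivFunOnFinite.symm b)
      exact ⟨l, by simpa only [hl, Finsupp.equivFunOnFinite_symm_apply_apply] using hb⟩

end WeylPair

lemma dElt_mul_xElt (i j : Fin (n + 1)) :
    dElt K n i * xElt K n j = xElt K n j * dElt K n i + if i = j then 1 else 0 := by
  refine Subtype.ext (LinearMap.ext fun f => ?_)
  by_cases h : i = j
  · subst h
    simp [xElt, dElt, xOp, dOp, Derivation.leibniz]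
  · simp [xElt, dElt, xOp, dOp, Derivation.leibniz, h, Ne.symm h]

lemma commute_xElt (i j : Fin (n + 1)) : Commute (xElt K n i) (xElt K n j) :=
  Subtype.ext (LinearMap.ext fun f => mul_left_comm (X i) (X j) f)

lemma commute_dElt (i j : Fin (n + 1)) : Commute (dElt K n i) (dElt K n j) := by
  have hlie : ⁅(pderiv i : Derivation K (Amb K n) (Amb K n)), pderiv j⁆ = 0 :=
    derivation_ext fun m => by
      rw [Derivation.commutator_apply]
      simp [pderiv_X, Pi.single_apply, apply_ite]
  refine Subtype.ext (LinearMap.ext fun f => sub_eq_zero.1 ?_)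
  exact (Derivation.commutator_apply ..).symm.trans (DFunLike.congr_fun hlie f)

lemma adjoin_xElt_dElt :
    Algebra.adjoin K (Set.range (xElt K n) ∪ Set.range (dElt K n)) = ⊤ := by
  have hpreimage : Set.range (xElt K n) ∪ Set.range (dElt K n) =
      Subtype.val ⁻¹' (Set.range (xOp K n) ∪ Set.range (dOp K n)) := by
    ext P
    simp [Subtype.ext_iff, xElt, dElt]
  rw [hpreimage]
  exact Algebra.adjoin_adjoin_coe_preimage

lemma isWeylPair_xElt_dElt : IsWeylPair K (xElt K n) (dElt K n) where
  y_mul_x := dElt_mul_xElt K n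
  commute_x := commute_xElt K n
  commute_y := commute_dElt K n
  adjoin_eq_top := adjoin_xElt_dElt K n

lemma eulerElt_eq_sum : eulerElt K n d = ∑ i, (d i : K) • (xElt K n i * dElt K n i) :=
  Subtype.ext <| by rw [AddSubmonoidClass.coe_finsetSum]; rfl

/-- For `t ∈ K`, the `t`-eigenspace of `E` acting on `Δ` is nonzero iff
`t = −(Σ_j d_j + s)` for some `s ∈ 𝒜`, where `𝒜` is the additive submonoid of `ℕ`
generated by `d_0, …, d_n`; i.e. the set of `E`-eigenvalues on `Δ` is `−Σ_j d_j − 𝒜`. -/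
theorem stmt6 (hd : ∀ i, 0 < d i) (t : K) :
    (∃ v : Delta K n, v ≠ 0 ∧ eulerElt K n d • v = t • v) ↔
      ∃ b : Fin (n+1) → ℕ, t = -((∑ j, (d j : K)) + ∑ i, (b i : K) * (d i : K)) := by
  rw [eulerElt_eq_sum]
  exact stmt6_general (isWeylPair_xElt_dElt K n) (fun i => (d i : K)) t

end
end

section
/- Assume n ≥ 2 and let λ ∈ K. If m ∈ D satisfies x_i∘m ∈ D(E−λ) for every i = 0,…,n, then m ∈ D(E−λ). (Equivalently: the degree-zero socle Hom_A(A/A_{≥1}, D/D(E−λ)) vanishes, i.e., no nonzero class in D/D(E−λ) is annihilated by all the x_i.) -/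
/-!
Context: `K` is a field of characteristic zero, `n ≥ 0`, and `d 0, …, d n` are
positive integers.  `A = K[x_0, …, x_n]` is the polynomial ring, graded with
`x i` of weighted degree `d i`.  Inside `End_K(A)` we have the multiplication
operators `x i`, the partial derivatives `∂ i`, the Weyl algebra `D` generated
by them, and the Euler field `E = Σ_i d_i x_i ∂_i`.
-/

open MvPolynomial Finset

set_option synthInstance.maxHeartbeats 1000000
set_option maxHeartbeats 2000000

noncomputable section

variable (K : Type) [Field K] [CharZero K] (n : ℕ)

variable (d : Fin (n+1) → ℕ)

/-!
Let `f, g ∈ A` be coprime and let `f m = v P` and `g m = w P` in `D`. Then `(g v - f w) P = 0`, and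
`D` is a domain, so `g v = f w` when `P ≠ 0`. As `f` and `g` are coprime, every value of `v` is a
multiple of `f`; since `D` is free over `A` on the `∂^α`, this makes `v = f u` with `u ∈ D`, and
cancelling `f` in `f m = f u P` gives `m = u P`.

That `D` is a domain follows from the locally nilpotent derivations `[x_i, ·]`: by the Leibniz rule,
in characteristic zero, the last nonvanishing iterate on a product is a nonzero multiple of the
product of the last nonvanishing iterates. Applying this to one variable after the other reduces to
operators commuting with all `x_i`, which are multiplications by polynomials.
-/

section Iterate

variable {M : Type*}

lemma exists_iterate_ne_zero_and_iterate_succ_eq_zero [Zero M] {f : M → M} {u : M}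
    (hu : u ≠ 0) (hnil : ∃ m, f^[m] u = 0) : ∃ m, f^[m] u ≠ 0 ∧ f^[m + 1] u = 0 := by
  classical
  obtain ⟨m, hm⟩ := Nat.exists_eq_add_one_of_ne_zero (mt (Nat.find_eq_zero hnil).1 hu)
  exact ⟨m, Nat.find_min hnil (hm ▸ m.lt_succ_self), hm ▸ Nat.find_spec hnil⟩

variable [AddZeroClass M] {δ : M →+ M}

lemma iterate_eq_zero_of_le {m l : ℕ} {u : M} (hml : m ≤ l) (hu : δ^[m] u = 0) :
    δ^[l] u = 0 := by
  rw [← Nat.sub_add_cancel hml, Function.iterate_add_apply, hu, iterate_map_zero]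

lemma exists_iterate_add_eq_zero {u v : M} (hu : ∃ m, δ^[m] u = 0)
    (hv : ∃ l, δ^[l] v = 0) : ∃ r, δ^[r] (u + v) = 0 := by
  obtain ⟨m, hm⟩ := hu
  obtain ⟨l, hl⟩ := hv
  refine ⟨max m l, ?_⟩
  rw [iterate_map_add, iterate_eq_zero_of_le (le_max_left m l) hm,
    iterate_eq_zero_of_le (le_max_right m l) hl, add_zero]

end Iterate

section Leibniz

variable {R : Type*} [NonUnitalNonAssocSemiring R]

section

variable {δ : R →+ R} (hδ : ∀ u v, δ (u * v) = δ u * v + u * δ v)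
include hδ

lemma iterate_mul_eq_sum_antidiagonal (m : ℕ) (u v : R) :
    δ^[m] (u * v) = ∑ p ∈ antidiagonal m, m.choose p.1 • (δ^[p.1] u * δ^[p.2] v) := by
  induction m with
  | zero => simp
  | succ m ih =>
    rw [sum_antidiagonal_choose_succ_nsmul (fun i j => δ^[i] u * δ^[j] v) m]
    simp only [Function.iterate_succ_apply', ih, map_sum, map_nsmul, hδ, smul_add, sum_add_distrib]
    refine (add_comm _ _).trans (congrArg _ (sum_congr rfl fun p hp => ?_))
    rw [m.choose_symm_of_eq_add (HasAntidiagonal.mem_antidiagonal.1 hp).symm]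

lemma exists_iterate_mul_eq_zero {u v : R} (hu : ∃ m, δ^[m] u = 0) (hv : ∃ l, δ^[l] v = 0) :
    ∃ r, δ^[r] (u * v) = 0 := by
  obtain ⟨m, hm⟩ := hu
  obtain ⟨l, hl⟩ := hv
  refine ⟨m + l, ?_⟩
  rw [iterate_mul_eq_sum_antidiagonal hδ]
  refine sum_eq_zero fun p hp => ?_
  obtain h | h : m ≤ p.1 ∨ l ≤ p.2 := by rw [HasAntidiagonal.mem_antidiagonal] at hp; omega
  · rw [iterate_eq_zero_of_le h hm, zero_mul, smul_zero]
  · rw [iterate_eq_zero_of_le h hl, mul_zero, smul_zero]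

lemma iterate_add_mul_of_iterate_succ_eq_zero {m l : ℕ} {u v : R} (hu : δ^[m + 1] u = 0)
    (hv : δ^[l + 1] v = 0) :
    δ^[m + l] (u * v) = (m + l).choose m • (δ^[m] u * δ^[l] v) := by
  rw [iterate_mul_eq_sum_antidiagonal hδ]
  refine sum_eq_single_of_mem (m, l) (HasAntidiagonal.mem_antidiagonal.2 rfl) fun p hp hne => ?_
  obtain h | h : m + 1 ≤ p.1 ∨ l + 1 ≤ p.2 := by
    rw [HasAntidiagonal.mem_antidiagonal] at hp
    rw [ne_eq, Prod.ext_iff] at hne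
    omega
  · rw [iterate_eq_zero_of_le h hu, zero_mul, smul_zero]
  · rw [iterate_eq_zero_of_le h hv, mul_zero, smul_zero]

end

theorem mul_ne_zero_of_commuting_derivations [IsAddTorsionFree R] {ι : Type*} [Finite ι]
    {δ : ι → R →+ R} (hδ : ∀ i u v, δ i (u * v) = δ i u * v + u * δ i v)
    (hcomm : ∀ i j, Function.Commute (δ i) (δ j))
    (hker : ∀ a b, (∀ i, δ i a = 0) → (∀ i, δ i b = 0) → a ≠ 0 → b ≠ 0 → a * b ≠ 0)
    {u v : R} (hu : ∀ i, ∃ m, (δ i)^[m] u = 0) (hv : ∀ i, ∃ m, (δ i)^[m] v = 0)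
    (hu₀ : u ≠ 0) (hv₀ : v ≠ 0) : u * v ≠ 0 := by
  classical
  have := Fintype.ofFinite ι
  have iterate_nil {i : ι} {w : R} (m : ℕ) (hw : ∀ j, ∃ l, (δ j)^[l] w = 0) (j : ι) :
      ∃ l, (δ j)^[l] ((δ i)^[m] w) = 0 := by
    obtain ⟨l, hl⟩ := hw j
    exact ⟨l, by rw [((hcomm j i).iterate_iterate l m).eq, hl, iterate_map_zero]⟩
  have iterate_ker {s : Finset ι} {i : ι} {w : R} {m : ℕ} (hm : (δ i)^[m + 1] w = 0)
      (hw : ∀ j ∉ insert i s, δ j w = 0) (j : ι) (hj : j ∉ s) : δ j ((δ i)^[m] w) = 0 := by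
    rcases eq_or_ne j i with rfl | hji
    · rwa [Function.iterate_succ_apply'] at hm
    · rw [((hcomm j i).iterate_right m).eq, hw j (by simp [hji, hj]), iterate_map_zero]
  suffices ∀ (s : Finset ι) {u v : R}, (∀ i, ∃ m, (δ i)^[m] u = 0) →
      (∀ i, ∃ m, (δ i)^[m] v = 0) → (∀ i ∉ s, δ i u = 0) → (∀ i ∉ s, δ i v = 0) →
      u ≠ 0 → v ≠ 0 → u * v ≠ 0 from
    this univ hu hv (fun i hi => absurd (mem_univ i) hi) (fun i hi => absurd (mem_univ i) hi)
      hu₀ hv₀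
  intro s
  induction s using Finset.induction with
  | empty =>
    exact fun _ _ hu hv => hker _ _ (fun i => hu i (notMem_empty i)) fun i => hv i (notMem_empty i)
  | insert i s _ ih =>
    intro u v hu hv hus hvs hu₀ hv₀ huv
    obtain ⟨m, hm₀, hm⟩ := exists_iterate_ne_zero_and_iterate_succ_eq_zero hu₀ (hu i)
    obtain ⟨l, hl₀, hl⟩ := exists_iterate_ne_zero_and_iterate_succ_eq_zero hv₀ (hv i)
    have hlead : (δ i)^[m] u * (δ i)^[l] v ≠ 0 :=
      ih (iterate_nil m hu) (iterate_nil l hv) (iterate_ker hm hus) (iterate_ker hl hvs) hm₀ hl₀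
    have htop := iterate_add_mul_of_iterate_succ_eq_zero (hδ i) hm hl
    rw [huv, iterate_map_zero] at htop
    exact smul_ne_zero (Nat.choose_pos (Nat.le_add_right m l)).ne' hlead htop.symm

end Leibniz

section InnerDerivation

variable {R : Type*} [Ring R]

/-- The inner derivation `u ↦ x u - u x` of a ring. -/
def innerDerivation (x : R) : R →+ R := AddMonoidHom.mulLeft x - AddMonoidHom.mulRight x

lemma innerDerivation_apply (x u : R) : innerDerivation x u = x * u - u * x := rfl

lemma innerDerivation_mul (x u v : R) :
    innerDerivation x (u * v) = innerDerivation x u * v + u * innerDerivation x v := by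
  simp only [innerDerivation_apply]
  noncomm_ring

lemma innerDerivation_eq_zero_iff {x u : R} : innerDerivation x u = 0 ↔ Commute x u :=
  sub_eq_zero

lemma innerDerivation_commute {x y : R} (h : Commute x y) :
    Function.Commute (innerDerivation x) (innerDerivation y) := fun u => by
  simp only [innerDerivation_apply, mul_sub, sub_mul, ← mul_assoc, h.eq]
  simp only [mul_assoc, h.eq]
  abel

end InnerDerivation

section MvPolynomial

variable {σ R : Type*} [CommSemiring R]

/-- The differential operator `∂^α` on `R[x_i : i ∈ σ]`, encoded through its values
`∂^α x^γ = (∏ i, γ_i (γ_i - 1) ⋯ (γ_i - α_i + 1)) x^(γ - α)` on monomials, where the coefficient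
vanishes as soon as the subtraction `γ - α` is truncated. -/
def iteratedPDeriv (α : σ →₀ ℕ) : Module.End R (MvPolynomial σ R) :=
  (basisMonomials σ R).constr R fun γ =>
    monomial (γ - α) (α.prod fun i k => ((γ i).descFactorial k : R))

lemma end_ext_monomial {u v : Module.End R (MvPolynomial σ R)}
    (h : ∀ γ, u (monomial γ 1) = v (monomial γ 1)) : u = v :=
  (basisMonomials σ R).ext fun γ => by simpa only [coe_basisMonomials] using h γ

lemma iteratedPDeriv_monomial (α γ : σ →₀ ℕ) :
    iteratedPDeriv α (monomial γ (1 : R)) =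
      monomial (γ - α) (α.prod fun i k => ((γ i).descFactorial k : R)) := by
  have h := (basisMonomials σ R).constr_basis R
    (fun γ => monomial (γ - α) (α.prod fun i k => ((γ i).descFactorial k : R))) γ
  rwa [coe_basisMonomials] at h

lemma iteratedPDeriv_zero : iteratedPDeriv (0 : σ →₀ ℕ) = (1 : Module.End R _) :=
  end_ext_monomial fun γ => by
    rw [iteratedPDeriv_monomial, tsub_zero, Finsupp.prod_zero_index, Module.End.one_apply]

lemma pderiv_mul_iteratedPDeriv (i : σ) (α : σ →₀ ℕ) :
    (pderiv i).toLinearMap * iteratedPDeriv α =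
      iteratedPDeriv (R := R) (α + Finsupp.single i 1) := by
  classical
  refine end_ext_monomial fun γ => ?_
  have hprod (β : σ →₀ ℕ) : β.prod (fun j k => ((γ j).descFactorial k : R)) =
      (γ i).descFactorial (β i) * (β.erase i).prod fun j k => ((γ j).descFactorial k : R) :=
    (Finsupp.mul_prod_erase' β i _ fun j => by rw [Nat.descFactorial_zero, Nat.cast_one]).symm
  have herase : (α + Finsupp.single i 1).erase i = α.erase i := by
    rw [Finsupp.erase_add, Finsupp.erase_single, add_zero]
  rw [Module.End.mul_apply, iteratedPDeriv_monomial, iteratedPDeriv_monomial,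
    Derivation.coeFn_coe, pderiv_monomial, tsub_tsub, hprod α,
    hprod (α + _), herase, Finsupp.add_apply, Finsupp.single_eq_same, Nat.descFactorial_succ,
    Finsupp.tsub_apply, Nat.cast_mul]
  congr 1
  ring

lemma iteratedPDeriv_monomial_of_not_le {α γ : σ →₀ ℕ} (h : ¬α ≤ γ) :
    iteratedPDeriv α (monomial γ (1 : R)) = 0 := by
  obtain ⟨i, hi⟩ : ∃ i, γ i < α i := by simpa [Finsupp.le_def] using h
  rw [iteratedPDeriv_monomial, Finsupp.prod, prod_eq_zero (i := i) (by simp; omega)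
    (by rw [Nat.descFactorial_of_lt hi, Nat.cast_zero]), map_zero]

lemma isUnit_iteratedPDeriv_monomial_self {k : Type*} [Field k] [CharZero k] (α : σ →₀ ℕ) :
    IsUnit (iteratedPDeriv α (monomial α (1 : k))) := by
  rw [iteratedPDeriv_monomial, tsub_self]
  refine IsUnit.map C (isUnit_iff_ne_zero.2 (prod_ne_zero_iff.2 fun i _ => ?_))
  change ((α i).descFactorial (α i) : k) ≠ 0
  rw [Nat.descFactorial_self]
  exact Nat.cast_ne_zero.2 (α i).factorial_ne_zero

/-- Evaluating at `x^α` kills the terms with `β ≰ α`, so `a α` is isolated modulo the coefficients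
with `β < α`. -/
lemma dvd_coeff_of_forall_dvd_linearCombination_apply {k : Type*} [Field k] [CharZero k]
    {q : MvPolynomial σ k} {a : (σ →₀ ℕ) →₀ MvPolynomial σ k}
    (h : ∀ f, q ∣ Finsupp.linearCombination (MvPolynomial σ k) (iteratedPDeriv (R := k)) a f)
    (α : σ →₀ ℕ) : q ∣ a α := by
  classical
  induction α using WellFoundedLT.induction with
  | ind α ih =>
    by_cases hα : α ∈ a.support
    · have hsum := h (monomial α 1)
      rw [Finsupp.linearCombination_apply, Finsupp.sum, LinearMap.sum_apply,
        ← add_sum_erase _ _ hα] at hsum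
      have hrest : q ∣ ∑ β ∈ a.support.erase α, (a β • iteratedPDeriv β) (monomial α (1 : k)) := by
        refine dvd_sum fun β hβ => ?_
        rw [LinearMap.smul_apply, smul_eq_mul]
        by_cases hle : β ≤ α
        · exact (ih β (lt_of_le_of_ne hle (ne_of_mem_erase hβ))).mul_right _
        · rw [iteratedPDeriv_monomial_of_not_le hle, mul_zero]
          exact dvd_zero q
      exact (isUnit_iteratedPDeriv_monomial_self α).dvd_mul_right.1 ((dvd_add_left hrest).1 hsum)
    · rw [Finsupp.notMem_support_iff.1 hα]
      exact dvd_zero q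

lemma eq_lmul_of_forall_commute_X {u : Module.End R (MvPolynomial σ R)}
    (hu : ∀ i, Commute (Algebra.lmul R (MvPolynomial σ R) (X i)) u) :
    u = Algebra.lmul R (MvPolynomial σ R) (u 1) := by
  refine LinearMap.ext fun p => ?_
  change u p = u 1 * p
  induction p using MvPolynomial.induction_on with
  | C c => rw [← mul_one (C c), ← smul_eq_C_mul, map_smul, mul_smul_comm, mul_one]
  | add p q hp hq => rw [map_add, hp, hq, mul_add]
  | mul_X p i hp =>
    have h : u (X i * p) = X i * u p := (LinearMap.congr_fun (hu i).eq p).symm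
    rw [mul_comm p, h, hp, mul_left_comm]

lemma isRelPrime_X_X {k : Type*} [Field k] {i j : σ} (hij : i ≠ j) :
    IsRelPrime (X i : MvPolynomial σ k) (X j) :=
  X_prime.irreducible.isRelPrime_iff_not_dvd.2 fun h => hij (X_dvd_X.1 h)

end MvPolynomial

section Weyl

variable {F : Type} [Field F] {r : ℕ}

lemma lmul_mem_weyl (p : Amb F r) : Algebra.lmul F (Amb F r) p ∈ Weyl F r := by
  induction p using MvPolynomial.induction_on with
  | C c => exact (AlgHom.commutes (Algebra.lmul F (Amb F r)) c).symm ▸ (Weyl F r).algebraMap_mem c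
  | add p q hp hq => exact (map_add (Algebra.lmul F (Amb F r)) p q).symm ▸ (Weyl F r).add_mem hp hq
  | mul_X p i hp =>
    exact (map_mul (Algebra.lmul F (Amb F r)) p (X i)).symm ▸
      (Weyl F r).mul_mem hp (Algebra.subset_adjoin (Or.inl ⟨i, rfl⟩))

/-- The inclusion `A → D` of the polynomials in the Weyl algebra as multiplication operators. -/
def polyElt : Amb F r →ₐ[F] Weyl F r :=
  (Algebra.lmul F (Amb F r)).codRestrict (Weyl F r) lmul_mem_weyl

lemma polyElt_injective : Function.Injective (polyElt (F := F) (r := r)) := fun _ _ h =>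
  Algebra.lmul_injective (congrArg Subtype.val h)

lemma iteratedPDeriv_mem_weyl (α : Fin (r + 1) →₀ ℕ) : iteratedPDeriv α ∈ Weyl F r := by
  have hadd (i : Fin (r + 1)) (k : ℕ) {β : Fin (r + 1) →₀ ℕ} (hβ : iteratedPDeriv β ∈ Weyl F r) :
      iteratedPDeriv (β + Finsupp.single i k) ∈ Weyl F r := by
    induction k with
    | zero => rwa [Finsupp.single_zero, add_zero]
    | succ k ih =>
      rw [Finsupp.single_add, ← add_assoc, ← pderiv_mul_iteratedPDeriv]
      exact (Weyl F r).mul_mem (Algebra.subset_adjoin (Or.inr ⟨i, rfl⟩)) ih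
  induction α using Finsupp.induction with
  | zero => exact iteratedPDeriv_zero (σ := Fin (r + 1)) (R := F) ▸ (Weyl F r).one_mem
  | single_add i k β _ _ ih => exact add_comm β (Finsupp.single i k) ▸ hadd i k ih

lemma smul_mem_weyl (p : Amb F r) {u : Module.End F (Amb F r)} (hu : u ∈ Weyl F r) :
    p • u ∈ Weyl F r :=
  (Weyl F r).mul_mem (lmul_mem_weyl p) hu

lemma dOp_mul_smul (i : Fin (r + 1)) (p : Amb F r) (u : Module.End F (Amb F r)) :
    dOp F r i * p • u = p • (dOp F r i * u) + pderiv i p • u := by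
  refine LinearMap.ext fun f => ?_
  change pderiv i (p * u f) = p * pderiv i (u f) + pderiv i p * u f
  rw [Derivation.leibniz, smul_eq_mul, smul_eq_mul, mul_comm (u f)]

lemma mul_mem_span_iteratedPDeriv {u v : Module.End F (Amb F r)} (hu : u ∈ Weyl F r)
    (hv : v ∈ Submodule.span (Amb F r) (Set.range (iteratedPDeriv (R := F)))) :
    u * v ∈ Submodule.span (Amb F r) (Set.range (iteratedPDeriv (R := F))) := by
  induction hu using Algebra.adjoin_induction generalizing v with
  | mem u hu =>
    rcases hu with ⟨i, rfl⟩ | ⟨i, rfl⟩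
    · exact Submodule.smul_mem _ (X i : Amb F r) hv
    · induction hv using Submodule.span_induction with
      | mem v hv =>
        obtain ⟨α, rfl⟩ := hv
        exact Submodule.subset_span ⟨_, (pderiv_mul_iteratedPDeriv i α).symm⟩
      | zero => rw [mul_zero]; exact zero_mem _
      | add v w _ _ hv hw => rw [mul_add]; exact add_mem hv hw
      | smul p v hv' hv =>
        rw [dOp_mul_smul]
        exact add_mem (Submodule.smul_mem _ _ hv) (Submodule.smul_mem _ _ hv')
  | algebraMap c =>
    rw [← Algebra.smul_def]
    exact Submodule.smul_of_tower_mem _ c hv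
  | add u w _ _ hu hw => rw [add_mul]; exact add_mem (hu hv) (hw hv)
  | mul u w _ _ hu hw => rw [mul_assoc]; exact hu (hw hv)

lemma mem_weyl_iff_mem_span_iteratedPDeriv {u : Module.End F (Amb F r)} :
    u ∈ Weyl F r ↔ u ∈ Submodule.span (Amb F r) (Set.range (iteratedPDeriv (R := F))) := by
  constructor
  · intro hu
    rw [← mul_one u]
    exact mul_mem_span_iteratedPDeriv hu (Submodule.subset_span ⟨0, iteratedPDeriv_zero⟩)
  · intro hu
    induction hu using Submodule.span_induction with
    | mem u hu => obtain ⟨α, rfl⟩ := hu; exact iteratedPDeriv_mem_weyl α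
    | zero => exact (Weyl F r).zero_mem
    | add u v _ _ hu hv => exact (Weyl F r).add_mem hu hv
    | smul p u _ hu => exact smul_mem_weyl p hu

lemma exists_eq_polyElt_mul_of_forall_dvd [CharZero F] {q : Amb F r} {u : Weyl F r}
    (h : ∀ f, q ∣ u.1 f) : ∃ w, u = polyElt q * w := by
  obtain ⟨a, ha⟩ := Finsupp.mem_span_range_iff_exists_finsupp.1
    (mem_weyl_iff_mem_span_iteratedPDeriv.1 u.2)
  choose b hb using dvd_coeff_of_forall_dvd_linearCombination_apply (q := q) (a := a)
    fun f => (LinearMap.congr_fun ha f) ▸ h f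
  have hb_mem : ∑ α ∈ a.support, b α • iteratedPDeriv α ∈ Weyl F r :=
    mem_weyl_iff_mem_span_iteratedPDeriv.2
      (sum_mem fun α _ => Submodule.smul_mem _ (b α) (Submodule.subset_span ⟨α, rfl⟩))
  refine ⟨⟨_, hb_mem⟩, Subtype.ext ?_⟩
  change u.1 = q • ∑ α ∈ a.support, b α • iteratedPDeriv α
  simp only [← ha, Finsupp.sum, smul_sum, smul_smul, ← hb]

lemma exists_iterate_innerDerivation_xOp_eq_zero (i : Fin (r + 1)) {u : Module.End F (Amb F r)}
    (hu : u ∈ Weyl F r) : ∃ m, (innerDerivation (xOp F r i))^[m] u = 0 := by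
  have hcomm (p : Amb F r) : innerDerivation (xOp F r i) (Algebra.lmul F _ p) = 0 :=
    innerDerivation_eq_zero_iff.2 ((Commute.all (X i) p).map (Algebra.lmul F (Amb F r)))
  induction hu using Algebra.adjoin_induction with
  | mem u hu =>
    rcases hu with ⟨j, rfl⟩ | ⟨j, rfl⟩
    · exact ⟨1, hcomm (X j)⟩
    · have hlie : innerDerivation (xOp F r i) (dOp F r j) =
          Algebra.lmul F (Amb F r) (-pderiv j (X i)) := by
        rw [innerDerivation_apply, map_neg, sub_eq_iff_eq_add', ← sub_eq_add_neg, eq_sub_iff_add_eq]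
        have h := dOp_mul_smul j (X i) (1 : Module.End F (Amb F r))
        rw [mul_one] at h
        exact h.symm
      exact ⟨2, (congrArg _ hlie).trans (hcomm _)⟩
  | algebraMap c => exact ⟨1, innerDerivation_eq_zero_iff.2 (Algebra.commutes c _).symm⟩
  | add u v _ _ hu hv => exact exists_iterate_add_eq_zero hu hv
  | mul u v _ _ hu hv => exact exists_iterate_mul_eq_zero (innerDerivation_mul _) hu hv

lemma mul_ne_zero_of_mem_weyl [CharZero F] {u v : Module.End F (Amb F r)} (hu : u ∈ Weyl F r)
    (hv : v ∈ Weyl F r) (hu₀ : u ≠ 0) (hv₀ : v ≠ 0) : u * v ≠ 0 := by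
  have : IsAddTorsionFree (Module.End F (Amb F r)) := .of_isTorsionFree F _
  have hcomm (i j : Fin (r + 1)) : Commute (xOp F r i) (xOp F r j) :=
    (Commute.all (X i) (X j)).map (Algebra.lmul F (Amb F r))
  refine mul_ne_zero_of_commuting_derivations (fun i => innerDerivation_mul (xOp F r i))
    (fun i j => innerDerivation_commute (hcomm i j)) ?_
    (fun i => exists_iterate_innerDerivation_xOp_eq_zero i hu)
    (fun i => exists_iterate_innerDerivation_xOp_eq_zero i hv) hu₀ hv₀
  intro a b ha hb
  rw [eq_lmul_of_forall_commute_X fun i => innerDerivation_eq_zero_iff.1 (ha i),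
    eq_lmul_of_forall_commute_X fun i => innerDerivation_eq_zero_iff.1 (hb i), ← map_mul]
  simp only [ne_eq, map_eq_zero_iff _ (Algebra.lmul_injective (R := F) (A := Amb F r))]
  exact mul_ne_zero

instance [CharZero F] : IsDomain (Weyl F r) :=
  have : NoZeroDivisors (Weyl F r) :=
    ⟨fun {u v} huv => by
      by_contra! h
      exact mul_ne_zero_of_mem_weyl u.2 v.2 (Subtype.coe_ne_coe.2 h.1) (Subtype.coe_ne_coe.2 h.2)
        (congrArg Subtype.val huv)⟩
  NoZeroDivisors.to_isDomain (Weyl F r)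

end Weyl

theorem stmt7_general {F : Type} [Field F] [CharZero F] {r : ℕ} {f g : Amb F r}
    (hfg : IsRelPrime f g) {P m : Weyl F r} (hfm : ∃ w, polyElt f * m = w * P)
    (hgm : ∃ w, polyElt g * m = w * P) : ∃ w, m = w * P := by
  wlog hf : f ≠ 0 generalizing f g
  · exact this hfg.symm hgm hfm (hfg.ne_zero_or_ne_zero.resolve_left hf)
  have hf' : polyElt f ≠ 0 := (map_ne_zero_iff _ polyElt_injective).2 hf
  obtain ⟨v, hv⟩ := hfm
  obtain ⟨w, hw⟩ := hgm
  rcases eq_or_ne P 0 with rfl | hP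
  · exact ⟨0, mul_left_cancel₀ hf' (by simpa using hv)⟩
  have hvw : polyElt g * v = polyElt f * w := by
    refine mul_right_cancel₀ hP ?_
    rw [mul_assoc, mul_assoc, ← hv, ← hw, ← mul_assoc, ← mul_assoc, ← map_mul, ← map_mul,
      mul_comm g]
  have hdvd (p : Amb F r) : f ∣ v.1 p :=
    hfg.dvd_of_dvd_mul_left (Dvd.intro _ (LinearMap.congr_fun (congrArg Subtype.val hvw) p).symm)
  obtain ⟨u, rfl⟩ := exists_eq_polyElt_mul_of_forall_dvd hdvd
  exact ⟨u, mul_left_cancel₀ hf' (by simpa only [mul_assoc] using hv)⟩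

/-- Assume `n ≥ 2` and let `λ ∈ K`.  If `m ∈ D` satisfies
`x_i∘m ∈ D(E−λ)` for every `i`, then `m ∈ D(E−λ)`; here `D(E−λ)` is the principal
left ideal `{w·(E − λ·1) : w ∈ D}`.  (Vanishing of `Hom_A(A/A_{≥1}, D/D(E−λ))`.) -/
theorem stmt7 (hn : 2 ≤ n) (hd : ∀ i, 0 < d i) (t : K) (m : Weyl K n)
    (h : ∀ i : Fin (n+1), ∃ w : Weyl K n,
        xElt K n i * m = w * (eulerElt K n d - t • 1)) :
    ∃ w : Weyl K n, m = w * (eulerElt K n d - t • 1) := by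
  have h0 : 0 ≠ Fin.last n := by simp only [ne_eq, Fin.ext_iff, Fin.val_zero, Fin.val_last]; omega
  exact stmt7_general (isRelPrime_X_X h0) (h 0) (h (Fin.last n))

end
end

section
/- Assume n ≥ 2 and let λ ∈ K. If m_0, m_1, …, m_n ∈ D satisfy x_i∘m_j − x_j∘m_i ∈ D(E−λ) for all i, j ∈ {0,…,n}, then there exists m′ ∈ D such that m_i − x_i∘m′ ∈ D(E−λ) for every i. (This is the vanishing of the first Koszul cohomology group Ext^1_A(A/A_{≥1}, D/D(E−λ)).) -/
/-!
Context: `K` is a field of characteristic zero, `n ≥ 0`, and `d 0, …, d n` are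
positive integers.  `A = K[x_0, …, x_n]` is the polynomial ring, graded with
`x i` of weighted degree `d i`.  Inside `End_K(A)` we have the multiplication
operators `x i`, the partial derivatives `∂ i`, the Weyl algebra `D` generated
by them, and the Euler field `E = Σ_i d_i x_i ∂_i`.
-/

open MvPolynomial Finset

set_option synthInstance.maxHeartbeats 1000000
set_option maxHeartbeats 2000000

noncomputable section

variable (K : Type) [Field K] [CharZero K] (n : ℕ)

variable (d : Fin (n+1) → ℕ)

/-!
Write `D` for the Weyl algebra. The vanishing holds for `D / D P` with `P ∈ D` arbitrary. As a left
`A`-module `D` is free on the operators `∂^α`. Moreover `D` is a domain: the commutators with the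
`x_i` are commuting locally nilpotent derivations, and replacing the two factors of a zero product
by their last nonzero iterates moves the product into the common kernel of these derivations, which
is the domain `A`. Hence `D P` is `0` or isomorphic to `D`, and in either case flat over `A`. Since
`x_0, x_1, x_2` is a weakly regular sequence on every flat `A`-module, the first Koszul cohomology
of `D` and the second one of `D P` vanish, so the long exact sequence of `0 → D P → D → D / D P → 0`
gives the vanishing of the first Koszul cohomology of `D / D P`.
-/

section Koszul

open RingTheory.Sequence

variable {R ι : Type*} [CommRing R] (x : ι → R) (M : Type*) [AddCommGroup M] [Module R M]

/-- Vanishing of the first Koszul cohomology group of `M` with respect to the family `x`. -/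
def KoszulExactOne : Prop :=
  ∀ m : ι → M, (∀ i j, x i • m j = x j • m i) → ∃ m', ∀ i, m i = x i • m'

/-- Vanishing of the second Koszul cohomology group of `M` with respect to the family `x`. -/
def KoszulExactTwo : Prop :=
  ∀ w : ι → ι → M, (∀ i, w i i = 0) → (∀ i j, w j i = -w i j) →
    (∀ i j k, x i • w j k - x j • w i k + x k • w i j = 0) →
    ∃ u : ι → M, ∀ i j, w i j = x i • u j - x j • u i

variable {x M}

theorem KoszulExactOne.quotient {N : Submodule R M} (hM : KoszulExactOne x M)
    (hN : KoszulExactTwo x N) : KoszulExactOne x (M ⧸ N) := by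
  intro m hm
  choose a ha using fun i => N.mkQ_surjective (m i)
  have hcocycle (i j) : x i • a j - x j • a i ∈ N := by
    rw [← N.ker_mkQ, LinearMap.mem_ker, map_sub, map_smul, map_smul, ha, ha, hm, sub_self]
  obtain ⟨u, hu⟩ := hN (fun i j => ⟨x i • a j - x j • a i, hcocycle i j⟩)
    (fun i => Subtype.ext (sub_self _)) (fun i j => Subtype.ext (neg_sub _ _).symm)
    fun i j k => Subtype.ext <| by
      simp only [Submodule.coe_add, Submodule.coe_sub, Submodule.coe_smul, Submodule.coe_zero]
      module
  obtain ⟨a', ha'⟩ := hM (fun i => a i - u i) fun i j => by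
    have huij : x i • a j - x j • a i = x i • (u j : M) - x j • (u i : M) :=
      congrArg Subtype.val (hu i j)
    rw [smul_sub, smul_sub, sub_eq_sub_iff_sub_eq_sub, huij]
  refine ⟨N.mkQ a', fun i => ?_⟩
  rw [← map_smul, ← ha', map_sub, ha, N.mkQ_apply (u i),
    (Submodule.Quotient.mk_eq_zero N).2 (u i).2, sub_zero]

theorem isWeaklyRegular_concat_iff {rs : List R} {r : R} :
    IsWeaklyRegular M (rs ++ [r]) ↔ IsWeaklyRegular M rs ∧
      ∀ f : M, r • f ∈ Ideal.ofList rs • (⊤ : Submodule R M) →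
        f ∈ Ideal.ofList rs • (⊤ : Submodule R M) := by
  rw [isWeaklyRegular_append_iff, isWeaklyRegular_singleton_iff,
    isSMulRegular_quotient_iff_mem_of_smul_mem]

theorem mem_ofList_singleton_smul_top_iff {a : R} {f : M} :
    f ∈ Ideal.ofList [a] • (⊤ : Submodule R M) ↔ ∃ g, f = a • g := by
  simp [Submodule.ideal_span_singleton_smul, Submodule.mem_smul_pointwise_iff_exists, eq_comm]

theorem mem_ofList_pair_smul_top_iff {a b : R} {f : M} :
    f ∈ Ideal.ofList [a, b] • (⊤ : Submodule R M) ↔ ∃ g h, f = a • g + b • h := by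
  rw [Ideal.ofList_cons_smul, Submodule.mem_sup]
  simp only [Submodule.mem_smul_pointwise_iff_exists, mem_ofList_singleton_smul_top_iff]
  simp [eq_comm]

theorem koszulExactOne_of_isWeaklyRegular {i₀ i₁ : ι}
    (h : IsWeaklyRegular M [x i₀, x i₁]) : KoszulExactOne x M := by
  obtain ⟨h₀, h₁⟩ := isWeaklyRegular_concat_iff (rs := [x i₀]) |>.1 h
  rw [isWeaklyRegular_singleton_iff] at h₀
  simp only [mem_ofList_singleton_smul_top_iff] at h₁
  intro m hm
  obtain ⟨m', hm'⟩ := h₁ (m i₀) ⟨m i₁, hm i₁ i₀⟩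
  refine ⟨m', fun i => h₀ ?_⟩
  change x i₀ • m i = x i₀ • x i • m'
  rw [hm, hm', smul_comm]

theorem koszulExactTwo_of_isWeaklyRegular {i₀ i₁ i₂ : ι}
    (h : IsWeaklyRegular M [x i₀, x i₁, x i₂]) : KoszulExactTwo x M := by
  obtain ⟨h, h₂⟩ := isWeaklyRegular_concat_iff (rs := [x i₀, x i₁]) |>.1 h
  obtain ⟨h₀, h₁⟩ := isWeaklyRegular_concat_iff (rs := [x i₀]) |>.1 h
  rw [isWeaklyRegular_singleton_iff] at h₀
  simp only [mem_ofList_singleton_smul_top_iff] at h₁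
  simp only [mem_ofList_pair_smul_top_iff] at h₂
  intro w _ _ hw
  obtain ⟨r, v, hrv⟩ : ∃ r v, w i₀ i₁ = x i₀ • r + x i₁ • v :=
    h₂ _ ⟨-w i₁ i₂, w i₀ i₂, by linear_combination (norm := module) hw i₀ i₁ i₂⟩
  have hu (j : ι) : ∃ u, w i₀ j - x j • v = x i₀ • u := by
    refine h₁ _ ⟨w i₁ j + x j • r, ?_⟩
    have := hw i₀ i₁ j
    rw [hrv] at this
    linear_combination (norm := module) -this
  choose u hu using hu
  refine ⟨u, fun i j => h₀ ?_⟩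
  change x i₀ • w i j = x i₀ • (x i • u j - x j • u i)
  linear_combination (norm := module) hw i₀ i j + x i • hu j - x j • hu i

end Koszul

section Variables

open RingTheory.Sequence

variable {σ R : Type*} [CommRing R]

theorem mem_span_X_image_of_X_mul_mem {s : Set σ} {k : σ} (hk : k ∉ s) {p : MvPolynomial σ R}
    (h : X k * p ∈ Ideal.span (X '' s : Set (MvPolynomial σ R))) :
    p ∈ Ideal.span (X '' s : Set (MvPolynomial σ R)) := by
  rw [mem_ideal_span_X_image] at h ⊢
  intro α hα
  obtain ⟨i, hi, hne⟩ := h (Finsupp.single k 1 + α) (by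
    rwa [mem_support_iff, coeff_X_mul, ← mem_support_iff])
  refine ⟨i, hi, ?_⟩
  rwa [Finsupp.add_apply, Finsupp.single_eq_of_ne (by rintro rfl; exact hk hi), zero_add] at hne

theorem isWeaklyRegular_map_X {l : List σ} (hl : l.Nodup) :
    IsWeaklyRegular (MvPolynomial σ R) (l.map (X : σ → MvPolynomial σ R)) := by
  induction l using List.reverseRecOn with
  | nil => exact .nil _ _
  | append_singleton l k ih =>
    rw [← List.concat_eq_append, List.nodup_concat] at hl
    obtain ⟨hk, hl⟩ := hl
    have hspan : Ideal.ofList (l.map X) =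
        Ideal.span (X '' {i | i ∈ l} : Set (MvPolynomial σ R)) := by
      simp [Ideal.ofList, Set.image]
    rw [List.map_append, List.map_singleton, isWeaklyRegular_concat_iff]
    refine ⟨ih hl, fun f hf => ?_⟩
    rw [smul_eq_mul, Ideal.mul_top, hspan] at hf ⊢
    exact mem_span_X_image_of_X_mul_mem (s := {i | i ∈ l}) hk hf

variable {M : Type*} [AddCommGroup M] [Module (MvPolynomial σ R) M]
  [Module.Flat (MvPolynomial σ R) M]

theorem isWeaklyRegular_map_X_of_flat {l : List σ} (hl : l.Nodup) :
    IsWeaklyRegular M (l.map (X : σ → MvPolynomial σ R)) :=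
  (TensorProduct.lid (MvPolynomial σ R) M).isWeaklyRegular_congr _ |>.1
    (isWeaklyRegular_map_X hl).isWeaklyRegular_rTensor

theorem koszulExactOne_X {i j : σ} (h : [i, j].Nodup) :
    KoszulExactOne (X : σ → MvPolynomial σ R) M :=
  koszulExactOne_of_isWeaklyRegular (isWeaklyRegular_map_X_of_flat h)

theorem koszulExactTwo_X {i j k : σ} (h : [i, j, k].Nodup) :
    KoszulExactTwo (X : σ → MvPolynomial σ R) M :=
  koszulExactTwo_of_isWeaklyRegular (isWeaklyRegular_map_X_of_flat h)

end Variables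

section Derivation

variable {k R : Type*} [CommRing k] [Ring R] [Algebra k R]

/-- A `k`-linear derivation of the algebra `R` each of whose orbits reaches `0`. Mathlib's
`Derivation` does not apply since `R` need not be commutative. -/
structure IsLocallyNilpotentDerivation (δ : Module.End k R) : Prop where
  leibniz (a b : R) : δ (a * b) = δ a * b + a * δ b
  exists_pow_apply_eq_zero (a : R) : ∃ m, (δ ^ m) a = 0

variable {δ : Module.End k R} {a b : R}

theorem pow_apply_mul_of_leibniz (hδ : ∀ a b, δ (a * b) = δ a * b + a * δ b) (m : ℕ) (a b : R) :
    (δ ^ m) (a * b) = ∑ ij ∈ antidiagonal m, m.choose ij.1 • ((δ ^ ij.1) a * (δ ^ ij.2) b) := by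
  induction m with
  | zero => simp
  | succ m ih =>
    rw [sum_antidiagonal_choose_succ_nsmul (fun i j => (δ ^ i) a * (δ ^ j) b) m]
    simp only [pow_succ', Module.End.mul_apply, ih, map_sum, map_nsmul, hδ, nsmul_add,
      sum_add_distrib]
    rw [add_comm, add_left_cancel_iff]
    exact sum_congr rfl fun ij hij => by
      rw [Nat.choose_symm_of_eq_add (mem_antidiagonal.1 hij).symm]

theorem pow_add_apply_mul_of_leibniz (hδ : ∀ a b, δ (a * b) = δ a * b + a * δ b) {m l : ℕ}
    (ha : (δ ^ (m + 1)) a = 0) (hb : (δ ^ (l + 1)) b = 0) :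
    (δ ^ (m + l)) (a * b) = (m + l).choose m • ((δ ^ m) a * (δ ^ l) b) := by
  rw [pow_apply_mul_of_leibniz hδ, sum_eq_single (m, l)]
  · rintro ⟨i, j⟩ hij hne
    rw [HasAntidiagonal.mem_antidiagonal] at hij
    obtain hi | hj : m + 1 ≤ i ∨ l + 1 ≤ j := by
      by_contra! h
      exact hne (Prod.ext (by lia) (by lia))
    · rw [Module.End.pow_map_zero_of_le hi ha, zero_mul, smul_zero]
    · rw [Module.End.pow_map_zero_of_le hj hb, mul_zero, smul_zero]
  · simp

theorem exists_pow_apply_eq_zero_of_adjoin_eq_top (hδ : ∀ a b, δ (a * b) = δ a * b + a * δ b)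
    {s : Set R} (hs : Algebra.adjoin k s = ⊤) (h : ∀ a ∈ s, ∃ m, (δ ^ m) a = 0) (a : R) :
    ∃ m, (δ ^ m) a = 0 := by
  have ha : a ∈ Algebra.adjoin k s := hs ▸ Algebra.mem_top
  induction ha using Algebra.adjoin_induction with
  | mem a ha => exact h a ha
  | algebraMap r =>
    have h1 : δ 1 = 0 := by simpa using hδ 1 1
    exact ⟨1, by rw [pow_one, Algebra.algebraMap_eq_smul_one, map_smul, h1, smul_zero]⟩
  | add a b _ _ ha hb =>
    obtain ⟨m, hm⟩ := ha
    obtain ⟨l, hl⟩ := hb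
    exact ⟨m + l, by rw [map_add, Module.End.pow_map_zero_of_le (Nat.le_add_right m l) hm,
      Module.End.pow_map_zero_of_le (Nat.le_add_left l m) hl, add_zero]⟩
  | mul a b _ _ ha hb =>
    obtain ⟨m, hm⟩ := ha
    obtain ⟨l, hl⟩ := hb
    refine ⟨(m + l) + 1, ?_⟩
    have hm' : (δ ^ (m + 1)) a = 0 := Module.End.pow_map_zero_of_le (Nat.le_succ m) hm
    have hl' : (δ ^ (l + 1)) b = 0 := Module.End.pow_map_zero_of_le (Nat.le_succ l) hl
    rw [pow_succ', Module.End.mul_apply, pow_add_apply_mul_of_leibniz hδ hm' hl', hm, zero_mul,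
      smul_zero, map_zero]

namespace IsLocallyNilpotentDerivation

theorem exists_pow_apply_ne_zero (hδ : IsLocallyNilpotentDerivation δ) (ha : a ≠ 0) :
    ∃ m, (δ ^ m) a ≠ 0 ∧ (δ ^ (m + 1)) a = 0 :=
  Nat.exists_not_and_succ_of_not_zero_of_exists (by simpa) (hδ.exists_pow_apply_eq_zero a)

theorem exists_pow_mul_pow_eq_zero [IsAddTorsionFree R] (hδ : IsLocallyNilpotentDerivation δ)
    (ha : a ≠ 0) (hb : b ≠ 0) (hab : a * b = 0) :
    ∃ m l, (δ ^ m) a ≠ 0 ∧ (δ ^ l) b ≠ 0 ∧ δ ((δ ^ m) a) = 0 ∧ δ ((δ ^ l) b) = 0 ∧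
      (δ ^ m) a * (δ ^ l) b = 0 := by
  obtain ⟨m, hm, hm'⟩ := hδ.exists_pow_apply_ne_zero ha
  obtain ⟨l, hl, hl'⟩ := hδ.exists_pow_apply_ne_zero hb
  refine ⟨m, l, hm, hl, ?_, ?_, ?_⟩
  · rwa [← Module.End.mul_apply, ← pow_succ']
  · rwa [← Module.End.mul_apply, ← pow_succ']
  · have h := pow_add_apply_mul_of_leibniz hδ.leibniz hm' hl'
    rw [hab, map_zero, eq_comm, smul_eq_zero] at h
    exact h.resolve_left (Nat.choose_pos (Nat.le_add_right m l)).ne'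

end IsLocallyNilpotentDerivation

section Family

variable [IsAddTorsionFree R] {ι : Type*} {δ : ι → Module.End k R}

theorem exists_ne_zero_mul_eq_zero_of_isLocallyNilpotentDerivation
    (hδ : ∀ i, IsLocallyNilpotentDerivation (δ i)) (hcomm : ∀ i j, Commute (δ i) (δ j))
    (ha : a ≠ 0) (hb : b ≠ 0) (hab : a * b = 0) (s : Finset ι) :
    ∃ a b : R, a ≠ 0 ∧ b ≠ 0 ∧ a * b = 0 ∧ ∀ i ∈ s, δ i a = 0 ∧ δ i b = 0 := by
  induction s using Finset.cons_induction with
  | empty => exact ⟨a, b, ha, hb, hab, by simp⟩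
  | cons j s hj ih =>
    obtain ⟨a, b, ha, hb, hab, hs⟩ := ih
    obtain ⟨m, l, ham, hbl, hδa, hδb, hmul⟩ := (hδ j).exists_pow_mul_pow_eq_zero ha hb hab
    have hpow {i : ι} {c : R} (hc : δ i c = 0) (m : ℕ) : δ i ((δ j ^ m) c) = 0 := by
      rw [← Module.End.mul_apply, ((hcomm i j).pow_right m).eq, Module.End.mul_apply, hc, map_zero]
    refine ⟨_, _, ham, hbl, hmul, fun i hi => ?_⟩
    obtain rfl | hi := Finset.mem_cons.1 hi
    · exact ⟨hδa, hδb⟩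
    · exact ⟨hpow (hs i hi).1 m, hpow (hs i hi).2 l⟩

theorem noZeroDivisors_of_isLocallyNilpotentDerivation [Finite ι]
    (hδ : ∀ i, IsLocallyNilpotentDerivation (δ i)) (hcomm : ∀ i j, Commute (δ i) (δ j))
    (hker : ∀ a b, (∀ i, δ i a = 0) → (∀ i, δ i b = 0) → a * b = 0 → a = 0 ∨ b = 0) :
    NoZeroDivisors R := by
  have := Fintype.ofFinite ι
  refine ⟨fun {a b} hab => ?_⟩
  by_contra! hne
  obtain ⟨a, b, ha, hb, hab, h⟩ := exists_ne_zero_mul_eq_zero_of_isLocallyNilpotentDerivation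
    hδ hcomm hne.1 hne.2 hab univ
  exact (hker a b (fun i => (h i (mem_univ i)).1) (fun i => (h i (mem_univ i)).2) hab).elim ha hb

end Family

end Derivation

section IteratedPderiv

variable {σ R : Type*} [Fintype σ] [CommSemiring R]

/-- The iterated partial derivative `∂^α`, given by its values on the monomials. -/
def iteratedPderiv (α : σ →₀ ℕ) : Module.End R (MvPolynomial σ R) :=
  (basisMonomials σ R).constr R fun β =>
    monomial (β - α) (∏ i, ((β i).descFactorial (α i) : R))

theorem iteratedPderiv_monomial (α β : σ →₀ ℕ) :
    iteratedPderiv α (monomial β (1 : R)) =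
      monomial (β - α) (∏ i, ((β i).descFactorial (α i) : R)) := by
  simpa [iteratedPderiv] using (basisMonomials σ R).constr_basis R (fun β =>
    monomial (β - α) (∏ i, ((β i).descFactorial (α i) : R))) β

theorem iteratedPderiv_monomial_eq_zero {α β : σ →₀ ℕ} (h : ¬α ≤ β) :
    iteratedPderiv α (monomial β (1 : R)) = 0 := by
  obtain ⟨i, hi⟩ : ∃ i, β i < α i := by simpa [Finsupp.le_def] using h
  rw [iteratedPderiv_monomial, prod_eq_zero (mem_univ i), monomial_zero]
  rw [Nat.descFactorial_eq_zero_iff_lt.2 hi, Nat.cast_zero]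

theorem iteratedPderiv_monomial_self_ne_zero [CharZero R] (α : σ →₀ ℕ) :
    iteratedPderiv α (monomial α (1 : R)) ≠ 0 := by
  rw [iteratedPderiv_monomial, ← Nat.cast_prod, Ne, monomial_eq_zero, Nat.cast_eq_zero,
    prod_eq_zero_iff]
  simp

theorem iteratedPderiv_zero : iteratedPderiv (0 : σ →₀ ℕ) = (1 : Module.End R _) :=
  linearMap_ext fun β => LinearMap.ext_ring <| by simp [iteratedPderiv_monomial]

theorem prod_descFactorial_add_single (α β : σ →₀ ℕ) (i : σ) :
    ∏ j, (β j).descFactorial ((α + Finsupp.single i 1 : σ →₀ ℕ) j) =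
      (∏ j, (β j).descFactorial (α j)) * (β - α) i := by
  classical
  have hfactor (j : σ) : (β j).descFactorial ((α + Finsupp.single i 1 : σ →₀ ℕ) j) =
      (β j).descFactorial (α j) * if j = i then (β - α) j else 1 := by
    obtain rfl | hj := eq_or_ne j i
    · simp [Nat.descFactorial_succ, mul_comm]
    · simp [hj]
  simp only [hfactor, prod_mul_distrib, prod_ite_eq', mem_univ, if_true]

theorem pderiv_comp_iteratedPderiv (i : σ) (α : σ →₀ ℕ) :
    (pderiv i).toLinearMap ∘ₗ iteratedPderiv (R := R) α =
      iteratedPderiv (α + Finsupp.single i 1) := by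
  refine linearMap_ext fun β => LinearMap.ext_ring ?_
  have hprod := congrArg (Nat.cast (R := R)) (prod_descFactorial_add_single α β i)
  rw [Nat.cast_mul, Nat.cast_prod, Nat.cast_prod] at hprod
  rw [LinearMap.comp_apply, LinearMap.comp_apply, LinearMap.comp_apply, iteratedPderiv_monomial,
    iteratedPderiv_monomial, hprod, tsub_add_eq_tsub_tsub]
  exact pderiv_monomial

end IteratedPderiv

namespace Weyl

variable {K n}

-- Without this shortcut, `Module.End K (Weyl K n)` is not found to be an additive group.
instance : Ring (Weyl K n) := (Weyl K n).toRing

theorem adjoin_range_xElt_union_range_dElt :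
    Algebra.adjoin K (Set.range (xElt K n) ∪ Set.range (dElt K n)) = ⊤ := by
  have hpre : Set.range (xElt K n) ∪ Set.range (dElt K n) =
      (↑) ⁻¹' (Set.range (xOp K n) ∪ Set.range (dOp K n)) := by
    ext T
    simp [xElt, dElt, Subtype.ext_iff]
  rw [hpre]
  exact Algebra.adjoin_adjoin_coe_preimage

theorem lmul_mem (p : Amb K n) : Algebra.lmul K (Amb K n) p ∈ Weyl K n := by
  induction p using MvPolynomial.induction_on with
  | C r => rw [← algebraMap_eq, AlgHom.commutes]; exact Subalgebra.algebraMap_mem _ r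
  | add p q hp hq => rw [map_add]; exact add_mem hp hq
  | mul_X p i hp => rw [map_mul]; exact mul_mem hp (xOp_mem K n i)

/-- The inclusion of `A` into the Weyl algebra as the multiplication operators. -/
def ofPolynomial : Amb K n →ₐ[K] Weyl K n :=
  (Algebra.lmul K (Amb K n)).codRestrict (Weyl K n) lmul_mem

/-- The Weyl algebra is an `A`-module by multiplication on the left. -/
instance : Module (Amb K n) (Weyl K n) :=
  Module.compHom (Weyl K n) (ofPolynomial (K := K) (n := n)).toRingHom

theorem ofPolynomial_X (i : Fin (n + 1)) : ofPolynomial (X i) = xElt K n i := rfl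

theorem smul_def (p : Amb K n) (T : Weyl K n) : p • T = ofPolynomial p * T := rfl

instance : IsScalarTower (Amb K n) (Weyl K n) (Weyl K n) :=
  ⟨fun p S T => mul_assoc (ofPolynomial p) S T⟩

theorem dElt_mul_smul (i : Fin (n + 1)) (p : Amb K n) (T : Weyl K n) :
    dElt K n i * p • T = p • (dElt K n i * T) + pderiv i p • T :=
  Subtype.ext <| LinearMap.ext fun f => by
    change pderiv i (p * T.1 f) = p * pderiv i (T.1 f) + pderiv i p * T.1 f
    exact pderiv_mul.trans (add_comm _ _)

section NoZeroDivisors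

/-- The commutator with `x_i`. -/
def adX (i : Fin (n + 1)) : Module.End K (Weyl K n) :=
  LinearMap.mulLeft K (xElt K n i) - LinearMap.mulRight K (xElt K n i)

theorem adX_apply (i : Fin (n + 1)) (T : Weyl K n) :
    adX i T = xElt K n i * T - T * xElt K n i := rfl

theorem commute_xElt_ofPolynomial (i : Fin (n + 1)) (p : Amb K n) :
    Commute (xElt K n i) (ofPolynomial p) :=
  (Commute.all (X i) p).map ofPolynomial

theorem adX_ofPolynomial (i : Fin (n + 1)) (p : Amb K n) : adX i (ofPolynomial p) = 0 :=
  sub_eq_zero.2 (commute_xElt_ofPolynomial i p)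

theorem adX_dElt (i j : Fin (n + 1)) :
    adX i (dElt K n j) = ofPolynomial (-pderiv j (X i)) := by
  have h : dElt K n j * xElt K n i = xElt K n i * dElt K n j + ofPolynomial (pderiv j (X i)) := by
    simpa only [smul_def, mul_one, ofPolynomial_X] using dElt_mul_smul j (X i) (1 : Weyl K n)
  rw [adX_apply, h, map_neg, sub_add_cancel_left]

theorem isLocallyNilpotentDerivation_adX (i : Fin (n + 1)) :
    IsLocallyNilpotentDerivation (adX (K := K) i) := by
  have hleibniz (S T : Weyl K n) : adX i (S * T) = adX i S * T + S * adX i T := by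
    simp only [adX_apply]
    noncomm_ring
  refine ⟨hleibniz, exists_pow_apply_eq_zero_of_adjoin_eq_top hleibniz
    adjoin_range_xElt_union_range_dElt ?_⟩
  rintro _ (⟨j, rfl⟩ | ⟨j, rfl⟩)
  · exact ⟨1, adX_ofPolynomial i (X j)⟩
  · exact ⟨2, by rw [pow_two, Module.End.mul_apply, adX_dElt, adX_ofPolynomial]⟩

theorem commute_adX (i j : Fin (n + 1)) : Commute (adX (K := K) i) (adX j) := by
  have h : xElt K n i * xElt K n j = xElt K n j * xElt K n i :=
    commute_xElt_ofPolynomial i (X j)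
  refine LinearMap.ext fun T => ?_
  simp only [Module.End.mul_apply, adX_apply, mul_sub, sub_mul, mul_assoc, h]
  simp only [← mul_assoc, h]
  abel

theorem eq_ofPolynomial_of_adX_eq_zero {T : Weyl K n} (h : ∀ i, adX i T = 0) :
    T = ofPolynomial (T.1 1) := by
  refine Subtype.ext (LinearMap.ext fun f => ?_)
  change T.1 f = T.1 1 * f
  induction f using MvPolynomial.induction_on with
  | C r => rw [← mul_one (C r), C_mul', map_smul, mul_smul_comm, mul_one]
  | add p q hp hq => rw [map_add, hp, hq, mul_add]
  | mul_X p i hp =>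
    have hX : X i * T.1 p = T.1 (X i * p) :=
      congrArg (fun S : Weyl K n => S.1 p) (sub_eq_zero.1 (h i))
    rw [mul_comm p, ← hX, hp, mul_left_comm]

theorem ofPolynomial_injective : Function.Injective (ofPolynomial (K := K) (n := n)) :=
  fun p q h => by
    have h1 : p * 1 = q * 1 := congrArg (fun S : Weyl K n => S.1 1) h
    rwa [mul_one, mul_one] at h1

instance : NoZeroDivisors (Weyl K n) := by
  have : IsAddTorsionFree (Weyl K n) := .of_isTorsionFree K _
  refine noZeroDivisors_of_isLocallyNilpotentDerivation isLocallyNilpotentDerivation_adX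
    commute_adX fun S T hS hT hST => ?_
  rw [eq_ofPolynomial_of_adX_eq_zero hS, eq_ofPolynomial_of_adX_eq_zero hT] at hST ⊢
  rwa [← map_mul, map_eq_zero_iff _ ofPolynomial_injective, mul_eq_zero,
    ← map_eq_zero_iff _ ofPolynomial_injective, ← map_eq_zero_iff _ ofPolynomial_injective] at hST

instance : IsDomain (Weyl K n) := NoZeroDivisors.to_isDomain _

end NoZeroDivisors

section Free

theorem iteratedPderiv_mem (α : Fin (n + 1) →₀ ℕ) : iteratedPderiv α ∈ Weyl K n := by
  induction α using Finsupp.induction with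
  | zero => rw [iteratedPderiv_zero]; exact one_mem _
  | single_add i k α _ _ hα =>
    have hstep (l : ℕ) : iteratedPderiv (Finsupp.single i l + α) ∈ Weyl K n := by
      induction l with
      | zero => rwa [Finsupp.single_zero, zero_add]
      | succ l ih =>
        rw [Finsupp.single_add, add_right_comm, ← pderiv_comp_iteratedPderiv]
        exact mul_mem (dOp_mem K n i) ih
    exact hstep k

/-- The element `∂^α` of the Weyl algebra. -/
def dPow (α : Fin (n + 1) →₀ ℕ) : Weyl K n := ⟨iteratedPderiv α, iteratedPderiv_mem α⟩

theorem dPow_zero : dPow (K := K) (0 : Fin (n + 1) →₀ ℕ) = 1 := Subtype.ext iteratedPderiv_zero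

theorem dElt_mul_dPow (i : Fin (n + 1)) (α : Fin (n + 1) →₀ ℕ) :
    dElt K n i * dPow α = dPow (α + Finsupp.single i 1) :=
  Subtype.ext (pderiv_comp_iteratedPderiv i α)

/-- Evaluation of differential operators at `f`, as an `A`-linear map. -/
def evalAt (f : Amb K n) : Weyl K n →ₗ[Amb K n] Amb K n where
  toFun T := T.1 f
  map_add' _ _ := rfl
  map_smul' _ _ := rfl

theorem evalAt_dPow (f : Amb K n) (α : Fin (n + 1) →₀ ℕ) :
    evalAt f (dPow α) = iteratedPderiv α f := rfl

theorem linearIndependent_dPow :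
    LinearIndependent (Amb K n) (dPow : (Fin (n + 1) →₀ ℕ) → Weyl K n) := by
  rw [linearIndependent_iff]
  intro c hc
  by_contra hne
  obtain ⟨α, hα⟩ := c.support.exists_minimal (Finsupp.support_nonempty_iff.2 hne)
  have hother (β) (hβ : β ∈ c.support) (hβα : β ≠ α) :
      c β • iteratedPderiv β (monomial α (1 : K)) = 0 := by
    rw [iteratedPderiv_monomial_eq_zero fun hle => hβα (hα.eq_of_le hβ hle), smul_zero]
  have heval : ∑ β ∈ c.support, c β • iteratedPderiv β (monomial α (1 : K)) = 0 := by
    simpa [Finsupp.linearCombination_apply, Finsupp.sum, evalAt_dPow]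
      using congrArg (evalAt (monomial α 1)) hc
  rw [sum_eq_single_of_mem α hα.prop hother, smul_eq_mul, mul_eq_zero] at heval
  exact heval.elim (Finsupp.mem_support_iff.1 hα.prop) (iteratedPderiv_monomial_self_ne_zero α)

theorem mul_mem_span_range_dPow (T : Weyl K n) {S : Weyl K n}
    (hS : S ∈ Submodule.span (Amb K n) (Set.range dPow)) :
    T * S ∈ Submodule.span (Amb K n) (Set.range dPow) := by
  have hT : T ∈ Algebra.adjoin K (Set.range (xElt K n) ∪ Set.range (dElt K n)) := by
    rw [adjoin_range_xElt_union_range_dElt]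
    exact Algebra.mem_top
  induction hT using Algebra.adjoin_induction generalizing S with
  | algebraMap r =>
    rw [← AlgHom.commutes ofPolynomial]
    exact Submodule.smul_mem _ (algebraMap K (Amb K n) r) hS
  | add T T' _ _ hT hT' => rw [add_mul]; exact add_mem (hT hS) (hT' hS)
  | mul T T' _ _ hT hT' => rw [mul_assoc]; exact hT (hT' hS)
  | mem T hT =>
    obtain ⟨i, rfl⟩ | ⟨i, rfl⟩ := hT
    · exact Submodule.smul_mem _ (X i) hS
    · induction hS using Submodule.span_induction with
      | zero => rw [mul_zero]; exact zero_mem _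
      | add S S' _ _ hS hS' => rw [mul_add]; exact add_mem hS hS'
      | mem S hS =>
        obtain ⟨α, rfl⟩ := hS
        rw [dElt_mul_dPow]
        exact Submodule.subset_span ⟨_, rfl⟩
      | smul p S hS hdS =>
        rw [dElt_mul_smul]
        exact add_mem (Submodule.smul_mem _ p hdS) (Submodule.smul_mem _ _ hS)

theorem span_range_dPow : Submodule.span (Amb K n) (Set.range (dPow (K := K) (n := n))) = ⊤ :=
  Submodule.eq_top_iff'.2 fun T => by
    simpa [dPow_zero] using mul_mem_span_range_dPow T (Submodule.subset_span ⟨0, rfl⟩)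

instance : Module.Free (Amb K n) (Weyl K n) :=
  .of_basis (Module.Basis.mk linearIndependent_dPow span_range_dPow.ge)

end Free

section PrincipalLeftIdeal

/-- The left ideal `D P` of the Weyl algebra `D`, as an `A`-submodule. -/
def principalLeftIdeal (P : Weyl K n) : Submodule (Amb K n) (Weyl K n) :=
  LinearMap.range ((LinearMap.toSpanSingleton (Weyl K n) (Weyl K n) P).restrictScalars (Amb K n))

theorem mem_principalLeftIdeal {P T : Weyl K n} :
    T ∈ principalLeftIdeal P ↔ ∃ w, T = w * P := by
  simp [principalLeftIdeal, eq_comm]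

instance flat_principalLeftIdeal (P : Weyl K n) :
    Module.Flat (Amb K n) (principalLeftIdeal P) := by
  obtain rfl | hP := eq_or_ne P 0
  · have hbot : principalLeftIdeal (0 : Weyl K n) = ⊥ := by
      rw [principalLeftIdeal, LinearMap.toSpanSingleton_zero]
      exact LinearMap.range_zero
    rw [hbot]
    infer_instance
  · have hinj : Function.Injective
        ((LinearMap.toSpanSingleton (Weyl K n) (Weyl K n) P).restrictScalars (Amb K n)) :=
      mul_left_injective₀ hP
    exact .of_linearEquiv (LinearEquiv.ofInjective _ hinj).symm

end PrincipalLeftIdeal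

end Weyl

theorem stmt8_general (hn : 2 ≤ n) (P : Weyl K n) (m : Fin (n + 1) → Weyl K n)
    (h : ∀ i j : Fin (n + 1), ∃ w : Weyl K n,
      xElt K n i * m j - xElt K n j * m i = w * P) :
    ∃ m' : Weyl K n, ∀ i : Fin (n + 1), ∃ w : Weyl K n, m i - xElt K n i * m' = w * P := by
  let N := Weyl.principalLeftIdeal P
  have hN {T : Weyl K n} : N.mkQ T = 0 ↔ ∃ w, T = w * P :=
    (Submodule.Quotient.mk_eq_zero N).trans Weyl.mem_principalLeftIdeal
  have hX : [(0 : Fin (n + 1)), ⟨1, by lia⟩, ⟨2, by lia⟩].Nodup := by simp [Fin.ext_iff]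
  have hquot : KoszulExactOne (X : _ → Amb K n) (Weyl K n ⧸ N) :=
    (koszulExactOne_X hX.of_cons).quotient (koszulExactTwo_X hX)
  obtain ⟨q, hq⟩ := hquot (fun i => N.mkQ (m i)) fun i j => by
    rw [← sub_eq_zero, ← map_smul, ← map_smul, ← map_sub]
    exact hN.2 (h i j)
  obtain ⟨m', rfl⟩ := N.mkQ_surjective q
  refine ⟨m', fun i => hN.1 ?_⟩
  rw [map_sub, sub_eq_zero, hq, ← map_smul, Weyl.smul_def, Weyl.ofPolynomial_X]

/-- Assume `n ≥ 2` and let `λ ∈ K`.  If `m_0, …, m_n ∈ D` satisfy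
`x_i∘m_j − x_j∘m_i ∈ D(E−λ)` for all `i, j`, then there is `m' ∈ D` with
`m_i − x_i∘m' ∈ D(E−λ)` for every `i`.  (Vanishing of `Ext¹_A(A/A_{≥1}, D/D(E−λ))`.) -/
theorem stmt8 (hn : 2 ≤ n) (hd : ∀ i, 0 < d i) (t : K) (m : Fin (n+1) → Weyl K n)
    (h : ∀ i j : Fin (n+1), ∃ w : Weyl K n,
        xElt K n i * m j - xElt K n j * m i = w * (eulerElt K n d - t • 1)) :
    ∃ m' : Weyl K n, ∀ i : Fin (n+1), ∃ w : Weyl K n,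
      m i - xElt K n i * m' = w * (eulerElt K n d - t • 1) :=
  stmt8_general K n hn _ m h

end
end

section
/- Let n = 1, so D is the Weyl algebra on x_0, x_1 with E = d_0 x_0∂_0 + d_1 x_1∂_1. Then x_0∘(d_0·∂_0) − x_1∘(−d_1·∂_1) = E, yet there is no m ∈ D such that both −d_1·∂_1 − x_0∘m ∈ D·E and d_0·∂_0 − x_1∘m ∈ D·E. (Hence the conclusion of the first-Koszul-cohomology vanishing fails for n = 1 and λ = 0.) -/
/-!
Context: `K` is a field of characteristic zero, `n ≥ 0`, and `d 0, …, d n` are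
positive integers.  `A = K[x_0, …, x_n]` is the polynomial ring, graded with
`x i` of weighted degree `d i`.  Inside `End_K(A)` we have the multiplication
operators `x i`, the partial derivatives `∂ i`, the Weyl algebra `D` generated
by them, and the Euler field `E = Σ_i d_i x_i ∂_i`.
-/

open MvPolynomial Finset

set_option synthInstance.maxHeartbeats 1000000
set_option maxHeartbeats 2000000

noncomputable section

variable (K : Type) [Field K] [CharZero K] (n : ℕ)

variable (d : Fin (n+1) → ℕ)

/-!
An operator `u ∈ D` is locally nilpotent under the commutator with each multiplication operator,
and this makes it rigid: if `u` kills all positive powers of `x_j` modulo the ideal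
`I = (x_i : i ≠ j)`, then it also kills `1` modulo `I`.

Suppose `c ∂_j - ∑_{i ≠ j} x_i m_i = w E` with `w ∈ D`. Evaluating at `x_j ^ (b + 1)` modulo `I` and
cancelling `b + 1` gives `d_j w(x_j ^ (b + 1)) = c x_j ^ b`: on positive powers, `d_j w` is division
by `x_j`, up to the factor `c`. So `u = d_j x_j w - c` kills them, hence it kills `1`, and then
`x_j` divides the constant `c` modulo `I`, which forces `c = 0`.
-/

section EngelSubalgebra

attribute [local instance] LieRing.ofAssociativeRing

open LieAlgebra (ad)

section Ring

variable (R : Type*) {B : Type*} [CommRing R] [Ring B] [Algebra R B]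

lemma ad_mul (a p q : B) : ad R B a (p * q) = ad R B a p * q + p * ad R B a q := by
  simp only [LieAlgebra.ad_apply, Ring.lie_def]
  noncomm_ring

lemma ad_pow_mul (a p q : B) (k : ℕ) :
    (ad R B a ^ k) (p * q) =
      ∑ ij ∈ antidiagonal k, k.choose ij.1 • ((ad R B a ^ ij.1) p * (ad R B a ^ ij.2) q) := by
  induction k with
  | zero => simp
  | succ k ih =>
    rw [sum_antidiagonal_choose_succ_nsmul (fun i j ↦ (ad R B a ^ i) p * (ad R B a ^ j) q) k]
    simp only [pow_succ', Module.End.mul_apply, ih, map_sum, map_nsmul, ad_mul, nsmul_add,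
      sum_add_distrib]
    rw [add_comm, add_left_cancel_iff, sum_congr rfl]
    rintro ⟨i, j⟩ hij
    rw [Nat.choose_symm_of_eq_add (HasAntidiagonal.mem_antidiagonal.mp hij).symm]

/-- The elements of an associative algebra on which `ad a` is nilpotent: the Engel subalgebra of
`a`, here as an associative subalgebra. If `a` is a multiplication operator, it contains all
differential operators. -/
def engelSubalgebra (a : B) : Subalgebra R B where
  carrier := LieSubalgebra.engel R a
  add_mem' := (LieSubalgebra.engel R a).add_mem
  mul_mem' {p q} hp hq := by
    obtain ⟨k, hk⟩ := (LieSubalgebra.mem_engel_iff R a p).mp hp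
    obtain ⟨l, hl⟩ := (LieSubalgebra.mem_engel_iff R a q).mp hq
    refine (LieSubalgebra.mem_engel_iff R a _).mpr ⟨k + l, ?_⟩
    rw [ad_pow_mul]
    refine sum_eq_zero fun ij hij ↦ ?_
    obtain h | h : k ≤ ij.1 ∨ l ≤ ij.2 := by
      rw [HasAntidiagonal.mem_antidiagonal] at hij
      lia
    all_goals simp [Module.End.pow_map_zero_of_le h, hk, hl]
  algebraMap_mem' r := (LieSubalgebra.mem_engel_iff R a _).mpr
    ⟨1, by simp [Ring.lie_def, Algebra.commutes]⟩

variable {R}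

lemma mem_engelSubalgebra_iff {a p : B} :
    p ∈ engelSubalgebra R a ↔ ∃ k, (ad R B a ^ k) p = 0 :=
  LieSubalgebra.mem_engel_iff R a p

lemma ad_mem_engelSubalgebra_iff {a p : B} :
    ad R B a p ∈ engelSubalgebra R a ↔ p ∈ engelSubalgebra R a := by
  simp only [mem_engelSubalgebra_iff, ← Module.End.mul_apply, ← pow_succ]
  exact ⟨fun ⟨k, hk⟩ ↦ ⟨k + 1, hk⟩,
    fun ⟨k, hk⟩ ↦ ⟨k, Module.End.pow_map_zero_of_le k.le_succ hk⟩⟩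

end Ring

section CommRing

variable {R A : Type*} [CommRing R] [CommRing A] [Algebra R A]

lemma mulLeft_mem_engelSubalgebra (f g : A) :
    LinearMap.mulLeft R g ∈ engelSubalgebra R (LinearMap.mulLeft R f) := by
  refine mem_engelSubalgebra_iff.mpr ⟨1, LinearMap.ext fun p ↦ ?_⟩
  simp [Ring.lie_def, mul_left_comm]

lemma ad_mulLeft_derivation (f : A) (δ : Derivation R A A) :
    ad R (Module.End R A) (LinearMap.mulLeft R f) (δ : A →ₗ[R] A) = LinearMap.mulLeft R (-δ f) := by
  refine LinearMap.ext fun p ↦ ?_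
  simp [Ring.lie_def, mul_comm]

lemma derivation_mem_engelSubalgebra (f : A) (δ : Derivation R A A) :
    (δ : A →ₗ[R] A) ∈ engelSubalgebra R (LinearMap.mulLeft R f) := by
  rw [← ad_mem_engelSubalgebra_iff, ad_mulLeft_derivation]
  exact mulLeft_mem_engelSubalgebra f _

lemma map_apply_one_eq_zero_of_mem_engelSubalgebra {C F : Type*} [Ring C] [NoZeroDivisors C]
    [FunLike F A C] [RingHomClass F A C] (φ : F) {x : A} (hx : φ x ≠ 0) {u : Module.End R A}
    (hu : u ∈ engelSubalgebra R (LinearMap.mulLeft R x))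
    (hpow : ∀ b : ℕ, φ (u (x ^ (b + 1))) = 0) : φ (u 1) = 0 := by
  obtain ⟨k, hk⟩ := mem_engelSubalgebra_iff.mp hu
  induction k generalizing u with
  | zero => simp_all
  | succ k ih =>
    set v := ad R (Module.End R A) (LinearMap.mulLeft R x) u with hv
    have hmap (b : ℕ) : φ (v (x ^ b)) = φ x * φ (u (x ^ b)) := by
      simp [hv, Ring.lie_def, ← pow_succ', hpow]
    have hv_one : φ (v 1) = 0 := ih (ad_mem_engelSubalgebra_iff.mpr hu)
      (fun b ↦ by rw [hmap, hpow, mul_zero]) (by rwa [pow_succ] at hk)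
    have hmul : φ x * φ (u 1) = 0 := by simpa [hv_one] using (hmap 0).symm
    exact (mul_eq_zero.mp hmul).resolve_left hx

end CommRing

end EngelSubalgebra

section Operators

omit [CharZero K]

lemma weyl_le_engelSubalgebra (f : Amb K n) :
    Weyl K n ≤ engelSubalgebra K (LinearMap.mulLeft K f) := by
  refine Algebra.adjoin_le ?_
  rintro _ (⟨i, rfl⟩ | ⟨i, rfl⟩)
  · exact mulLeft_mem_engelSubalgebra f (X i)
  · exact derivation_mem_engelSubalgebra f (pderiv i)

lemma dOp_X_pow_succ (j : Fin (n + 1)) (b : ℕ) :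
    dOp K n j (X j ^ (b + 1)) = (b + 1 : K) • X j ^ b := by
  simp [dOp, Derivation.leibniz_pow, MvPolynomial.smul_eq_C_mul]

lemma euler_X_pow_succ (j : Fin (n + 1)) (b : ℕ) :
    euler K n d (X j ^ (b + 1)) = (d j * (b + 1) : K) • X j ^ (b + 1) := by
  have hother (i : Fin (n + 1)) (hij : i ≠ j) : dOp K n i (X j ^ (b + 1)) = 0 := by
    simp [dOp, Derivation.leibniz_pow, pderiv_X_of_ne hij.symm]
  simp only [euler, LinearMap.sum_apply, LinearMap.smul_apply, Module.End.mul_apply]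
  rw [Fintype.sum_eq_single j fun i hij ↦ by simp [hother i hij], dOp_X_pow_succ, map_smul,
    smul_smul, xOp, LinearMap.mulLeft_apply, ← pow_succ']

variable {n}

/-- Restriction of polynomials to the `j`-th coordinate axis, that is, reduction modulo the ideal
generated by the `x_i` with `i ≠ j`; the remaining coordinate `x_j` becomes `Polynomial.X`. -/
def axisRestriction (j : Fin (n + 1)) : Amb K n →ₐ[K] Polynomial K :=
  aeval (Pi.single j Polynomial.X)

lemma axisRestriction_X_self (j : Fin (n + 1)) : axisRestriction K j (X j) = Polynomial.X := by
  simp [axisRestriction]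

lemma axisRestriction_xOp_of_ne {i j : Fin (n + 1)} (hij : i ≠ j) (f : Amb K n) :
    axisRestriction K j (xOp K n i f) = 0 := by
  simp [axisRestriction, xOp, hij]

end Operators

section Relation

variable {K n d}

lemma smul_axisRestriction_X_pow_succ_of_eq_mul_euler {j : Fin (n + 1)} {c : K}
    {m : Fin (n + 1) → Module.End K (Amb K n)} {w : Module.End K (Amb K n)}
    (h : c • dOp K n j - ∑ i ∈ {j}ᶜ, xOp K n i * m i = w * euler K n d) (b : ℕ) :
    (d j : K) • axisRestriction K j (w (X j ^ (b + 1))) = c • Polynomial.X ^ b := by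
  have hb : (b + 1 : K) ≠ 0 := b.cast_add_one_ne_zero
  have hsum : axisRestriction K j ((∑ i ∈ {j}ᶜ, xOp K n i * m i) (X j ^ (b + 1))) = 0 := by
    rw [LinearMap.sum_apply, map_sum]
    exact sum_eq_zero fun i hi ↦ axisRestriction_xOp_of_ne K (by simpa using hi) _
  have heval := congrArg (axisRestriction K j) (LinearMap.congr_fun h (X j ^ (b + 1)))
  rw [LinearMap.sub_apply, map_sub, hsum, sub_zero, LinearMap.smul_apply, dOp_X_pow_succ,
    Module.End.mul_apply, euler_X_pow_succ] at heval
  simp only [map_smul, map_pow, axisRestriction_X_self] at heval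
  refine smul_right_injective _ hb ?_
  simp only [smul_smul, mul_comm (b + 1 : K), ← heval]

lemma eq_zero_of_smul_dOp_sub_sum_eq_mul_euler {j : Fin (n + 1)} {c : K}
    {m : Fin (n + 1) → Module.End K (Amb K n)} {w : Module.End K (Amb K n)} (hw : w ∈ Weyl K n)
    (h : c • dOp K n j - ∑ i ∈ {j}ᶜ, xOp K n i * m i = w * euler K n d) : c = 0 := by
  set u : Module.End K (Amb K n) := (d j : K) • (xOp K n j * w) - algebraMap K _ c
  have hu : u ∈ Weyl K n :=
    sub_mem (Subalgebra.smul_mem _ (mul_mem (xOp_mem K n j) hw) _) (algebraMap_mem _ c)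
  have hmap (f : Amb K n) : axisRestriction K j (u f) =
      Polynomial.X * ((d j : K) • axisRestriction K j (w f)) - c • axisRestriction K j f := by
    simp [u, xOp, axisRestriction_X_self]
  have hu_one : axisRestriction K j (u 1) = 0 := by
    refine map_apply_one_eq_zero_of_mem_engelSubalgebra (axisRestriction K j)
      (x := X j) ?_ (weyl_le_engelSubalgebra K n _ hu) fun b ↦ ?_
    · simp [axisRestriction_X_self]
    · rw [hmap, smul_axisRestriction_X_pow_succ_of_eq_mul_euler h, map_pow,
        axisRestriction_X_self, pow_succ', mul_smul_comm, sub_self]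
  simpa [hmap] using congrArg (Polynomial.eval 0) hu_one

end Relation

lemma sum_xElt_mul_smul_dElt : ∑ i, xElt K n i * ((d i : K) • dElt K n i) = eulerElt K n d :=
  Subtype.ext <| by simp [xElt, dElt, eulerElt, euler]

theorem stmt10_general (j : Fin (n + 1)) {c : K} (hc : c ≠ 0) :
    ∑ i, xElt K n i * ((d i : K) • dElt K n i) = eulerElt K n d ∧
    ¬ ∃ (m : Fin (n + 1) → Weyl K n) (w : Weyl K n),
        c • dElt K n j - ∑ i ∈ {j}ᶜ, xElt K n i * m i = w * eulerElt K n d := by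
  refine ⟨sum_xElt_mul_smul_dElt K n d, fun ⟨m, w, h⟩ ↦ hc ?_⟩
  refine eq_zero_of_smul_dOp_sub_sum_eq_mul_euler (j := j) (d := d) (m := fun i ↦ m i) w.2 ?_
  simpa [xElt, dElt, eulerElt] using congrArg Subtype.val h

/-- Let `n = 1`, so `D` is the Weyl algebra on `x_0, x_1` with
`E = d_0 x_0∂_0 + d_1 x_1∂_1`.  Then `x_0∘(d_0·∂_0) − x_1∘(−d_1·∂_1) = E`, yet there is
no `m ∈ D` with both `−d_1·∂_1 − x_0∘m ∈ D·E` and `d_0·∂_0 − x_1∘m ∈ D·E`.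
(The first-Koszul-cohomology vanishing fails for `n = 1`, `λ = 0`.) -/
theorem stmt10 (d : Fin 2 → ℕ) (hd : ∀ i, 0 < d i) :
    xElt K 1 0 * ((d 0 : K) • dElt K 1 0) - xElt K 1 1 * ((-(d 1 : K)) • dElt K 1 1) =
      eulerElt K 1 d ∧
    ¬ ∃ m : Weyl K 1,
        (∃ w : Weyl K 1,
          (-(d 1 : K)) • dElt K 1 1 - xElt K 1 0 * m = w * eulerElt K 1 d) ∧
        (∃ w : Weyl K 1,
          (d 0 : K) • dElt K 1 0 - xElt K 1 1 * m = w * eulerElt K 1 d) := by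
  obtain ⟨hE, hm⟩ := stmt10_general K 1 d 1 (c := -(d 1 : K)) (by simpa using (hd 1).ne')
  have hcompl : ({1}ᶜ : Finset (Fin 2)) = {0} := rfl
  exact ⟨Subtype.ext (by simp [← hE, Fin.sum_univ_two]),
    fun ⟨m, ⟨w, h⟩, _⟩ ↦ hm ⟨fun _ ↦ m, w, by simpa [hcompl] using h⟩⟩

end
end

section
/- Assume n ≥ 1 and let λ ∈ K. Let M be a torsion-free λ-Euler graded D-module with M_0 = 0, and let m = lcm(d_0,…,d_n). Then M_{−mt} = 0 for every integer t > 0. -/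
/-!
Context: `K` is a field of characteristic zero, `n ≥ 0`, and `d 0, …, d n` are
positive integers.  `A = K[x_0, …, x_n]` is the polynomial ring, graded with
`x i` of weighted degree `d i`.  Inside `End_K(A)` we have the multiplication
operators `x i`, the partial derivatives `∂ i`, the Weyl algebra `D` generated
by them, and the Euler field `E = Σ_i d_i x_i ∂_i`.
-/

open MvPolynomial Finset

set_option synthInstance.maxHeartbeats 1000000
set_option maxHeartbeats 2000000

noncomputable section

variable (K : Type) [Field K] [CharZero K] (n : ℕ)

variable (d : Fin (n+1) → ℕ)

theorem mapsTo_iterate_add_nsmul {α G : Type*} [AddMonoid G] {f : α → α} {S : G → Set α} {e : G}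
    (hf : ∀ g, Set.MapsTo f (S g) (S (g + e))) (g : G) (j : ℕ) :
    Set.MapsTo f^[j] (S g) (S (g + j • e)) := by
  induction j with
  | zero => simpa only [Function.iterate_zero, zero_nsmul, add_zero] using Set.mapsTo_id (S g)
  | succ j ih =>
    rw [Function.iterate_succ', succ_nsmul, ← add_assoc]
    exact (hf _).comp ih

section JointlyTorsionFree

variable {ι R M : Type*} [Semiring R] [AddCommMonoid M] [Module R M]

/-- A family `f` of endomorphisms of `M` is *jointly torsion-free* if no nonzero element is killed
by a common power of all `f i`. For `f i` the multiplication by `x_i` this is the absence of torsion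
with respect to the ideal `(x_0, …, x_n)`. -/
def IsJointlyTorsionFree (f : ι → Module.End R M) : Prop :=
  ∀ m : M, (∃ c : ℕ, ∀ i, (f i ^ c) m = 0) → m = 0

variable {f : ι → Module.End R M}

theorem IsJointlyTorsionFree.eq_zero_of_forall_exists_pow_apply_eq_zero [Finite ι]
    (hf : IsJointlyTorsionFree f) {m : M} (hm : ∀ i, ∃ c : ℕ, (f i ^ c) m = 0) : m = 0 := by
  choose c hc using hm
  obtain ⟨C, hC⟩ := Finite.exists_le c
  exact hf m ⟨C, fun i => Module.End.pow_map_zero_of_le (hC i) (hc i)⟩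

theorem IsJointlyTorsionFree.eq_bot_of_forall_exists_add_nsmul_eq [Finite ι]
    (hf : IsJointlyTorsionFree f) {G : Type*} [AddMonoid G] {ℳ : G → Submodule R M} {e : ι → G}
    (hshift : ∀ i g, Set.MapsTo (f i) (ℳ g) (ℳ (g + e i))) {g₀ : G} (h₀ : ℳ g₀ = ⊥)
    {g : G} (hg : ∀ i, ∃ j : ℕ, g + j • e i = g₀) : ℳ g = ⊥ := by
  refine (Submodule.eq_bot_iff _).2 fun m hm =>
    hf.eq_zero_of_forall_exists_pow_apply_eq_zero fun i => ?_
  obtain ⟨j, hj⟩ := hg i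
  have hmem : (f i)^[j] m ∈ ℳ (g + j • e i) := mapsTo_iterate_add_nsmul (hshift i) g j hm
  rw [hj, h₀, Submodule.mem_bot, ← Module.End.pow_apply] at hmem
  exact ⟨j, hmem⟩

theorem stmt12_general [Fintype ι] (hf : IsJointlyTorsionFree f) {d : ι → ℕ}
    {ℳ : ℤ → Submodule R M} (hshift : ∀ i k, Set.MapsTo (f i) (ℳ k) (ℳ (k + d i)))
    (h₀ : ℳ 0 = ⊥) {s : ℤ} (hs : 0 ≤ s) : ℳ (-(((univ.lcm d : ℕ) : ℤ) * s)) = ⊥ := by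
  lift s to ℕ using hs
  refine hf.eq_bot_of_forall_exists_add_nsmul_eq hshift h₀ fun i => ?_
  obtain ⟨q, hq⟩ : d i ∣ univ.lcm d := dvd_lcm (mem_univ i)
  have hdeg : -(((univ.lcm d : ℕ) : ℤ) * s) + (q * s) • (d i : ℤ) = 0 := by
    rw [hq, nsmul_eq_mul]
    push_cast
    ring
  exact ⟨q * s, hdeg⟩

end JointlyTorsionFree

/-- Assume `n ≥ 1` and let `λ ∈ K`.  Let `M` be a torsion-free `λ`-Euler
graded `D`-module with `M_0 = 0` (the `D`-module structure is a representation
`ρ : D →ₐ[K] End_K(M)`, the grading `Mgr : ℤ → Submodule K M` is an internal direct sum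
with `x_i·M_k ⊆ M_{k+d_i}`, `∂_i·M_k ⊆ M_{k−d_i}` and `E·m = (λ+k)·m` on `M_k`), and let
`m = lcm(d_0,…,d_n)`.  Then `M_{−ms} = 0` for every integer `s > 0`. -/
theorem stmt12 (hn : 1 ≤ n) (hd : ∀ i, 0 < d i) (t : K)
    {M : Type} [AddCommGroup M] [Module K M]
    (ρ : Weyl K n →ₐ[K] Module.End K M)
    (Mgr : ℤ → Submodule K M)
    (hdirect : DirectSum.IsInternal Mgr)
    (hgx : ∀ (i : Fin (n+1)) (k : ℤ), ∀ m ∈ Mgr k, ρ (xElt K n i) m ∈ Mgr (k + d i))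
    (hgd : ∀ (i : Fin (n+1)) (k : ℤ), ∀ m ∈ Mgr k, ρ (dElt K n i) m ∈ Mgr (k - d i))
    (hgE : ∀ (k : ℤ), ∀ m ∈ Mgr k, ρ (eulerElt K n d) m = (t + (k : K)) • m)
    (htf : ∀ m : M, (∃ c : ℕ, ∀ i : Fin (n+1), (ρ (xElt K n i) ^ c) m = 0) → m = 0)
    (h0 : Mgr 0 = ⊥) :
    ∀ s : ℤ, 0 < s → Mgr (-(((Finset.univ.lcm d : ℕ) : ℤ) * s)) = ⊥ :=
  fun _ hs => stmt12_general (f := fun i => ρ (xElt K n i)) htf hgx h0 hs.le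

end
end
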